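/- arXiv:1806.09726 — 2 statements merged into one kernel-verified Lean document; each statement's English description precedes it below -/
import Mathlib

section
/- There is an absolute constant C > 0 such that for every integer m ≥ 3 there exists n₀ such that for all n ≥ n₀, the online Ramsey number satisfies r̃(m,n) ≥ n^((2−√2)m − C). -/
open scoped Classical

namespace OnlineRamseyGame

/-- A valid Builder strategy: it never builds a loop, and along any play the
edges built are pairwise distinct. -/
def ValidBuilder {V : Type*} (B : List Bool → Sym2 V) : Prop :=
  (∀ h : List Bool, ¬ (B h).IsDiag) ∧
  ∀ h : List Bool, ∀ i : ℕ, i < h.length → B (h.take i) ≠ B h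

/-- The history of Painter's colors after `t` turns against Painter strategy `P`
(Builder's moves are determined by this history). -/
def histOf (P : List Bool → Bool) : ℕ → List Bool
  | 0 => []
  | t + 1 => histOf P t ++ [P (histOf P t)]

/-- The graph built by `edge` contains a monochromatic clique on `k` vertices in
color `col` within the first `N` turns. -/
def HasMonoClique {V : Type*} (edge : ℕ → Sym2 V) (color : ℕ → Bool)
    (N k : ℕ) (col : Bool) : Prop :=
  ∃ S : Finset V, S.card = k ∧
    ∀ u ∈ S, ∀ v ∈ S, u ≠ v → ∃ t, t < N ∧ edge t = s(u, v) ∧ color t = col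

/-- Builder has a valid strategy winning the `(m,n)` online Ramsey game within `N`
turns against every Painter strategy (red = `true`, blue = `false`). -/
def BuilderWins (m n N : ℕ) : Prop :=
  ∃ B : List Bool → Sym2 ℕ, ValidBuilder B ∧
    ∀ P : List Bool → Bool,
      HasMonoClique (fun t => B (histOf P t)) (fun t => P (histOf P t)) N m true ∨
      HasMonoClique (fun t => B (histOf P t)) (fun t => P (histOf P t)) N n false

/-- The online Ramsey number `r̃(m,n)`: the least `N` such that Builder can
guarantee a win within `N` turns. -/
noncomputable def onlineRamsey (m n : ℕ) : ℕ := sInf {N | BuilderWins m n N}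

/-- Expectation of `φ` over `N` independent colors, each red with probability `p`. -/
noncomputable def Ex (p : ℝ) : ℕ → (List Bool → ℝ) → ℝ
  | 0, φ => φ []
  | N + 1, φ => p * Ex p N (fun h => φ (true :: h)) + (1 - p) * Ex p N (fun h => φ (false :: h))

lemma Ex_mono {p : ℝ} (h0 : 0 ≤ p) (h1 : p ≤ 1) (N : ℕ) :
    ∀ (φ ψ : List Bool → ℝ), (∀ h, h.length = N → φ h ≤ ψ h) → Ex p N φ ≤ Ex p N ψ := by
  induction N with
  | zero => intro φ ψ h; exact h [] rfl
  | succ N ih =>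
    intro φ ψ h
    simp only [Ex]
    have h1' : 0 ≤ 1 - p := by linarith
    have a := ih (fun l => φ (true :: l)) (fun l => ψ (true :: l)) (fun l hl => h _ (by simp [hl]))
    have b := ih (fun l => φ (false :: l)) (fun l => ψ (false :: l)) (fun l hl => h _ (by simp [hl]))
    gcongr

lemma Ex_add {p : ℝ} (N : ℕ) :
    ∀ (φ ψ : List Bool → ℝ), Ex p N (fun h => φ h + ψ h) = Ex p N φ + Ex p N ψ := by
  induction N with
  | zero => intro φ ψ; rfl
  | succ N ih =>
    intro φ ψ
    simp only [Ex]
    rw [ih, ih]; ring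

lemma Ex_const {p c : ℝ} (N : ℕ) : Ex p N (fun _ => c) = c := by
  induction N with
  | zero => rfl
  | succ N ih => simp only [Ex, ih]; ring

lemma Ex_sum {p : ℝ} {ι : Type*} (s : Finset ι) (N : ℕ) (f : ι → List Bool → ℝ) :
    Ex p N (fun h => ∑ i ∈ s, f i h) = ∑ i ∈ s, Ex p N (f i) := by
  induction s using Finset.induction_on with
  | empty => simp [Ex_const]
  | insert a s ha ih =>
    simp only [Finset.sum_insert ha]
    rw [Ex_add, ih]

/-- probability of a color -/
noncomputable def qq (p : ℝ) (col : Bool) : ℝ := if col then p else 1 - p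

/-- number of times a history satisfies `g` before a step along `ω` -/
noncomputable def Cnt (g : List Bool → Prop) (ω : List Bool) : ℕ :=
  ∑ t ∈ Finset.range ω.length, if g (ω.take t) then 1 else 0

/-- All `g`-times get color `col` and there are at least `L` of them. -/
def Evt (col : Bool) (g : List Bool → Prop) (L : ℕ) (ω : List Bool) : Prop :=
  (∀ t, t < ω.length → g (ω.take t) → ω.getD t false = col) ∧ L ≤ Cnt g ω

lemma Cnt_cons (g : List Bool → Prop) (x : Bool) (ω : List Bool) :
    Cnt g (x :: ω) = Cnt (fun h => g (x :: h)) ω + if g [] then 1 else 0 := by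
  simp only [Cnt, List.length_cons]
  rw [Finset.sum_range_succ']
  simp only [List.take_succ_cons, List.take_zero]
  rfl

lemma Evt_cons {col : Bool} {g : List Bool → Prop} {L : ℕ} {x : Bool} {ω : List Bool}
    (h : Evt col g L (x :: ω)) :
    Evt col (fun h => g (x :: h)) (if g [] then L - 1 else L) ω ∧ (g [] → x = col) := by
  obtain ⟨h1, h2⟩ := h
  refine ⟨⟨?_, ?_⟩, ?_⟩
  · intro t ht hg
    have := h1 (t+1) (by simpa using ht) (by simpa using hg)
    simpa using this
  · rw [Cnt_cons] at h2
    split_ifs at h2 ⊢ <;> omega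
  · intro hg
    have := h1 0 (by simp) (by simpa using hg)
    simpa using this

lemma Ex_Evt {p : ℝ} (h0 : 0 ≤ p) (h1 : p ≤ 1) (col : Bool) (N : ℕ) :
    ∀ (g : List Bool → Prop) (L : ℕ),
      Ex p N (fun ω => if Evt col g L ω then (1:ℝ) else 0) ≤ (qq p col) ^ L := by
  have hq0 : 0 ≤ qq p col := by unfold qq; split_ifs <;> linarith
  induction N with
  | zero =>
    intro g L
    simp only [Ex]
    split_ifs with h
    · have : L = 0 := by simpa [Cnt] using h.2
      simp [this]
    · positivity
  | succ N ih =>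
    intro g L
    simp only [Ex]
    have h1' : 0 ≤ 1 - p := by linarith
    by_cases hg : g []
    · rcases Nat.eq_zero_or_pos L with rfl | hL
      · have a : ∀ b : Bool, Ex p N (fun h => if Evt col g 0 (b :: h) then (1:ℝ) else 0) ≤ 1 := by
          intro b
          calc _ ≤ Ex p N (fun _ => (1:ℝ)) := Ex_mono h0 h1 N _ _ (by intro h _; split_ifs <;> norm_num)
            _ = 1 := Ex_const N
        have := a true
        have := a false
        simp only [pow_zero]
        nlinarith
      · have a : ∀ b : Bool, Ex p N (fun h => if Evt col g L (b :: h) then (1:ℝ) else 0) ≤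
            if b = col then qq p col ^ (L - 1) else 0 := by
          intro b
          split_ifs with hb
          · refine le_trans (Ex_mono h0 h1 N _ _ ?_) (ih (fun h => g (b :: h)) (L-1))
            intro h _
            by_cases hE : Evt col g L (b :: h)
            · have := (Evt_cons hE).1
              rw [if_pos hg] at this
              rw [if_pos hE, if_pos this]
            · rw [if_neg hE]; split_ifs <;> norm_num
          · refine le_trans (Ex_mono h0 h1 N _ (fun _ => 0) ?_) (le_of_eq (Ex_const N))
            intro h _
            rw [if_neg]
            intro hE
            exact hb ((Evt_cons hE).2 hg)
        have at' := a true
        have af := a false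
        obtain ⟨L, rfl⟩ : ∃ K, L = K + 1 := ⟨L - 1, by omega⟩
        rw [pow_succ]
        cases col
        · simp only [qq, Nat.add_sub_cancel, Bool.true_eq_false, if_false, if_true,
            Bool.false_eq_true] at at' af ⊢
          nlinarith
        · simp only [qq, Nat.add_sub_cancel, Bool.false_eq_true, if_false, if_true] at at' af ⊢
          nlinarith
    · have a : ∀ b : Bool, Ex p N (fun h => if Evt col g L (b :: h) then (1:ℝ) else 0) ≤
            qq p col ^ L := by
        intro b
        refine le_trans (Ex_mono h0 h1 N _ _ ?_) (ih (fun h => g (b :: h)) L)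
        intro h _
        by_cases hE : Evt col g L (b :: h)
        · have := (Evt_cons hE).1
          rw [if_neg hg] at this
          rw [if_pos hE, if_pos this]
        · rw [if_neg hE]; split_ifs <;> norm_num
      have at' := a true
      have af := a false
      nlinarith

/-- Ramsey's theorem, finite version. -/
lemma ramsey_fin (c : Sym2 ℕ → Bool) : ∀ s m n : ℕ, m + n ≤ s → ∀ V : Finset ℕ, 2 ^ s ≤ V.card →
    (∃ S ⊆ V, S.card = m ∧ ∀ u ∈ S, ∀ v ∈ S, u ≠ v → c s(u, v) = true) ∨
    (∃ S ⊆ V, S.card = n ∧ ∀ u ∈ S, ∀ v ∈ S, u ≠ v → c s(u, v) = false) := by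
  intro s
  induction s with
  | zero =>
    intro m n h V hV
    left
    exact ⟨∅, by simp, by simp; omega, by simp⟩
  | succ s ih =>
    intro m n h V hV
    rcases Nat.eq_zero_or_pos m with rfl | hm
    · left; exact ⟨∅, by simp, by simp, by simp⟩
    rcases Nat.eq_zero_or_pos n with rfl | hn
    · right; exact ⟨∅, by simp, by simp, by simp⟩
    have hpos : 0 < V.card := lt_of_lt_of_le (by positivity) hV
    obtain ⟨x, hx⟩ := Finset.card_pos.mp hpos
    set W := V.erase x with hW
    have hWc : W.card = V.card - 1 := Finset.card_erase_of_mem hx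
    have hsplit := Finset.card_filter_add_card_filter_not (s := W) (fun y => c s(x, y) = true)
    rw [pow_succ] at hV
    have hins : ∀ (col : Bool) (S : Finset ℕ), (∀ y ∈ S, y ≠ x ∧ c s(x, y) = col) →
        (∀ u ∈ S, ∀ v ∈ S, u ≠ v → c s(u, v) = col) →
        ∀ u ∈ insert x S, ∀ v ∈ insert x S, u ≠ v → c s(u, v) = col := by
      intro col S h1 h2 u hu v hv huv
      rcases Finset.mem_insert.mp hu with rfl | hu'
      · rcases Finset.mem_insert.mp hv with rfl | hv
        · exact absurd rfl huv
        · exact (h1 v hv).2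
      · rcases Finset.mem_insert.mp hv with rfl | hv
        · rw [Sym2.eq_swap]; exact (h1 u hu').2
        · exact h2 u hu' v hv huv
    by_cases hr : 2 ^ s ≤ (W.filter (fun y => c s(x, y) = true)).card
    · rcases ih (m - 1) n (by omega) _ hr with ⟨S, hS, hc, hm'⟩ | ⟨S, hS, hc, hm'⟩
      · left
        have hS' : ∀ y ∈ S, y ≠ x ∧ c s(x, y) = true := by
          intro y hy
          have := hS hy
          simp [hW] at this
          exact ⟨this.1.1, this.2⟩
        refine ⟨insert x S, ?_, ?_, hins _ S hS' hm'⟩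
        · intro y hy
          rcases Finset.mem_insert.mp hy with rfl | hy
          · exact hx
          · have := hS hy
            simp [hW] at this
            exact this.1.2
        · rw [Finset.card_insert_of_notMem (fun h => (hS' x h).1 rfl)]; omega
      · right
        exact ⟨S, hS.trans ((Finset.filter_subset _ _).trans (Finset.erase_subset _ _)), hc, hm'⟩
    · have hb : 2 ^ s ≤ (W.filter (fun y => ¬ c s(x, y) = true)).card := by omega
      rcases ih m (n - 1) (by omega) _ hb with ⟨S, hS, hc, hm'⟩ | ⟨S, hS, hc, hm'⟩
      · left
        exact ⟨S, hS.trans ((Finset.filter_subset _ _).trans (Finset.erase_subset _ _)), hc, hm'⟩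
      · right
        have hS' : ∀ y ∈ S, y ≠ x ∧ c s(x, y) = false := by
          intro y hy
          have := hS hy
          simp [hW] at this
          exact ⟨this.1.1, this.2⟩
        refine ⟨insert x S, ?_, ?_, hins _ S hS' hm'⟩
        · intro y hy
          rcases Finset.mem_insert.mp hy with rfl | hy
          · exact hx
          · have := hS hy
            simp [hW] at this
            exact this.1.2
        · rw [Finset.card_insert_of_notMem (fun h => (hS' x h).1 rfl)]; omega

lemma histOf_length (P : List Bool → Bool) (t : ℕ) : (histOf P t).length = t := by
  induction t with
  | zero => rfl
  | succ t ih => simp [histOf, ih]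

lemma exists_builderWins (m n : ℕ) : ∃ N, BuilderWins m n N := by
  classical
  have : Infinite {z : Sym2 ℕ // ¬ z.IsDiag} := by
    refine Infinite.of_injective (fun n : ℕ => (⟨s(0, n + 1), by simp⟩ : {z : Sym2 ℕ // ¬ z.IsDiag})) ?_
    intro a b h
    simpa using h
  have : Countable (Sym2 ℕ) := inferInstanceAs (Countable (Quot _))
  obtain ⟨e⟩ : Nonempty ({z : Sym2 ℕ // ¬ z.IsDiag} ≃ ℕ) := nonempty_equiv_of_countable
  set R := Finset.range (2 ^ (m + n))
  set N := ∑ z ∈ R.sym2, (if h : z.IsDiag then 0 else e ⟨z, h⟩ + 1) with hN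
  have hlt : ∀ z ∈ R.sym2, ∀ h : ¬ z.IsDiag, e ⟨z, h⟩ < N := by
    intro z hz h
    have := Finset.single_le_sum (f := fun z => (if h : z.IsDiag then 0 else e ⟨z, h⟩ + 1))
      (fun i _ => Nat.zero_le _) hz
    simp only [dif_neg h] at this
    exact lt_of_lt_of_le (Nat.lt_succ_self _) this
  refine ⟨N, fun h => (e.symm h.length).1, ⟨fun h => (e.symm h.length).2, ?_⟩, ?_⟩
  · intro h i hi heq
    have := e.symm.injective (Subtype.ext heq)
    simp at this
    omega
  · intro P
    set c : Sym2 ℕ → Bool := fun z => if h : z.IsDiag then true else P (histOf P (e ⟨z, h⟩)) with hc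
    have conv : ∀ col (S : Finset ℕ), S ⊆ R →
        (∀ u ∈ S, ∀ v ∈ S, u ≠ v → c s(u, v) = col) →
        ∀ u ∈ S, ∀ v ∈ S, u ≠ v → ∃ t, t < N ∧
          (e.symm (histOf P t).length).1 = s(u, v) ∧ P (histOf P t) = col := by
      intro col S hS h u hu v hv huv
      have hd : ¬ (s(u, v) : Sym2 ℕ).IsDiag := by simpa using huv
      refine ⟨e ⟨s(u, v), hd⟩, hlt _ ?_ hd, ?_, ?_⟩
      · rw [Finset.mk_mem_sym2_iff]; exact ⟨hS hu, hS hv⟩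
      · rw [histOf_length]; simp
      · have := h u hu v hv huv
        rw [hc] at this
        simpa only [dif_neg hd] using this
    rcases ramsey_fin c (m + n) m n le_rfl R (by simp [R]) with ⟨S, hS, hcard, h⟩ | ⟨S, hS, hcard, h⟩
    · left; exact ⟨S, hcard, conv true S hS h⟩
    · right; exact ⟨S, hcard, conv false S hS h⟩

/-- Labels: `k` matched pairs and `r` further vertices. -/
abbrev Lab (k r : ℕ) := (Fin k × Bool) ⊕ Fin r

lemma card_Lab (k r : ℕ) : Fintype.card (Lab k r) = 2 * k + r := by
  simp [mul_comm]

/-- The family of admissible sets of good pairs. -/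
noncomputable def Dset (k r : ℕ) : Finset (Finset (Sym2 (Lab k r))) :=
  Finset.univ.filter (fun D => (∀ z ∈ D, ¬ z.IsDiag) ∧
    (2 * k + r).choose 2 ≤ D.card + k * (k - 1))

lemma card_lt_pairs (k : ℕ) :
    ((Finset.univ : Finset (Fin k × Fin k)).filter (fun q => q.1 < q.2)).card * 2 ≤ k * (k - 1) := by
  have h1 : ((Finset.univ : Finset (Fin k × Fin k)).filter (fun q => q.1 < q.2)).card =
      ((Finset.univ : Finset (Fin k × Fin k)).filter (fun q => q.2 < q.1)).card := by
    refine Finset.card_bij (fun q _ => (q.2, q.1)) ?_ ?_ ?_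
    · intro q hq; simpa using hq
    · rintro ⟨a, b⟩ _ ⟨c, d⟩ _ h; simp at h; simp [h]
    · rintro ⟨a, b⟩ h; exact ⟨(b, a), by simpa using h, rfl⟩
  have h2 : ((Finset.univ : Finset (Fin k × Fin k)).filter (fun q => q.1 < q.2)) ∪
      ((Finset.univ : Finset (Fin k × Fin k)).filter (fun q => q.2 < q.1)) ⊆
      (Finset.univ : Finset (Fin k)).offDiag := by
    intro q hq
    rw [Finset.mem_union, Finset.mem_filter, Finset.mem_filter] at hq
    rw [Finset.mem_offDiag]
    refine ⟨Finset.mem_univ _, Finset.mem_univ _, ?_⟩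
    rcases hq with ⟨-, h⟩ | ⟨-, h⟩
    · exact ne_of_lt h
    · exact (ne_of_lt h).symm
  have h3 := Finset.card_le_card h2
  rw [Finset.card_union_of_disjoint, ← h1, Finset.offDiag_card] at h3
  · simp only [Finset.card_univ, Fintype.card_fin] at h3
    rw [Nat.mul_sub, mul_one]
    omega
  · rw [Finset.disjoint_filter]
    intro q _ h; exact not_lt.mpr h.le

/-- weight decreases if one or two terms are replaced by smaller ones -/
lemma sum_two_lt {k : ℕ} (f f' : Fin k → ℕ) (i j : Fin k) (hij : i ≠ j)
    (hrest : ∀ l, l ≠ i → l ≠ j → f' l = f l) (hi : f' i < max (f i) (f j))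
    (hj : f' j < max (f i) (f j)) : ∑ l, 2 ^ f' l < ∑ l, 2 ^ f l := by
  have hs : ∀ g : Fin k → ℕ, ∑ l, 2 ^ g l =
      2 ^ g i + (2 ^ g j + ∑ l ∈ (Finset.univ.erase i).erase j, 2 ^ g l) := by
    intro g
    rw [Finset.add_sum_erase _ (fun l => 2 ^ g l) (by simp [hij.symm]),
      Finset.add_sum_erase _ (fun l => 2 ^ g l) (by simp)]
  rw [hs f, hs f']
  have hr : ∑ l ∈ (Finset.univ.erase i).erase j, 2 ^ f' l =
      ∑ l ∈ (Finset.univ.erase i).erase j, 2 ^ f l := by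
    refine Finset.sum_congr rfl ?_
    intro l hl
    simp at hl
    rw [hrest l hl.2 hl.1]
  rw [hr]
  obtain ⟨M, hM⟩ : ∃ M, max (f i) (f j) = M + 1 := ⟨max (f i) (f j) - 1, by omega⟩
  have a : 2 ^ f' i ≤ 2 ^ M := Nat.pow_le_pow_right (by norm_num) (by omega)
  have b : 2 ^ f' j ≤ 2 ^ M := Nat.pow_le_pow_right (by norm_num) (by omega)
  have c : 2 ^ (M + 1) ≤ max (2 ^ f i) (2 ^ f j) := by
    rcases le_total (f i) (f j) with h | h
    · rw [max_eq_right h] at hM; rw [hM]; exact le_max_right _ _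
    · rw [max_eq_left h] at hM; rw [hM]; exact le_max_left _ _
  have d1 : 0 < 2 ^ f i := by positivity
  have d2 : 0 < 2 ^ f j := by positivity
  rw [pow_succ] at c
  rcases le_max_iff.mp c with c | c <;> omega

set_option maxHeartbeats 1000000 in
lemma struct_matching (k r : ℕ) (h2 : 2 ≤ 2 * k + r) (S : Finset ℕ) (hS : S.card = 2 * k + r)
    (tm : Sym2 ℕ → ℕ) :
    ∃ v : Lab k r → ℕ, Function.Injective v ∧ (∀ a, v a ∈ S) ∧
    ∃ τ : Lab k r → ℕ, (∀ a, ∃ b, b ≠ a ∧ τ a = tm s(v a, v b)) ∧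
      (∀ i x, τ (Sum.inl (i, x)) = τ (Sum.inl (i, false))) ∧
    ∃ D ∈ Dset k r, ∀ a b, s(a, b) ∈ D →
      τ a ≤ tm s(v a, v b) ∧ τ b ≤ tm s(v a, v b) := by
  classical
  have hcard : Fintype.card (Lab k r) = Fintype.card S := by
    rw [card_Lab, Fintype.card_coe, hS]
  obtain ⟨v0⟩ : Nonempty (Lab k r ≃ S) := ⟨Fintype.equivOfCardEq hcard⟩
  let wt : Equiv.Perm (Lab k r) → Fin k → ℕ := fun σ i =>
    tm s((v0 (σ (Sum.inl (i, false))) : ℕ), (v0 (σ (Sum.inl (i, true))) : ℕ))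
  obtain ⟨σ, hσ⟩ := Finite.exists_min (fun σ => ∑ i, 2 ^ wt σ i)
  set v : Lab k r → ℕ := fun a => (v0 (σ a) : ℕ) with hv
  have vinj : Function.Injective v := by
    intro a b h
    exact σ.injective (v0.injective (Subtype.ext h))
  -- swapping two labels does not decrease the weight
  have hswap : ∀ a b : Lab k r, ∑ i, 2 ^ wt σ i ≤ ∑ i, 2 ^ wt (σ * Equiv.swap a b) i :=
    fun a b => hσ _
  have hwt : ∀ a b i, wt (σ * Equiv.swap a b) i =
      tm s(v (Equiv.swap a b (Sum.inl (i, false))), v (Equiv.swap a b (Sum.inl (i, true)))) := by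
    intro a b i; rfl
  have hwt0 : ∀ i, wt σ i = tm s(v (Sum.inl (i, false)), v (Sum.inl (i, true))) := fun i => rfl
  have hwtx : ∀ i x, wt σ i = tm s(v (Sum.inl (i, x)), v (Sum.inl (i, !x))) := by
    intro i x
    cases x
    · rfl
    · rw [Sym2.eq_swap]; rfl
  have hwtx' : ∀ a b i x, wt (σ * Equiv.swap a b) i =
      tm s(v (Equiv.swap a b (Sum.inl (i, x))), v (Equiv.swap a b (Sum.inl (i, !x)))) := by
    intro a b i x
    cases x
    · rfl
    · rw [Sym2.eq_swap]; rfl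
  -- first touches
  have hft : ∀ u : Fin r, ∃ b : Lab k r, b ≠ Sum.inr u ∧ ∀ c, c ≠ Sum.inr u →
      tm s(v (Sum.inr u), v b) ≤ tm s(v (Sum.inr u), v c) := by
    intro u
    have hne : ((Finset.univ : Finset (Lab k r)).erase (Sum.inr u)).Nonempty := by
      rw [← Finset.card_pos, Finset.card_erase_of_mem (Finset.mem_univ _), Finset.card_univ, card_Lab]
      omega
    obtain ⟨b, hb, hmin⟩ := Finset.exists_min_image _ (fun b => tm s(v (Sum.inr u), v b)) hne
    exact ⟨b, Finset.ne_of_mem_erase hb, fun c hc => hmin c (by simp [hc])⟩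
  choose ft hft1 hft2 using hft
  let τ : Lab k r → ℕ := Sum.elim (fun ix => wt σ ix.1) (fun u => tm s(v (Sum.inr u), v (ft u)))
  have hτl : ∀ i x, τ (Sum.inl (i, x)) = wt σ i := fun i x => rfl
  have hτr : ∀ u, τ (Sum.inr u) = tm s(v (Sum.inr u), v (ft u)) := fun u => rfl
  -- an unmatched vertex never loses
  have hrl : ∀ u i x, wt σ i ≤ tm s(v (Sum.inr u), v (Sum.inl (i, x))) := by
    intro u i x
    by_contra hlt
    push Not at hlt
    have := hswap (Sum.inr u) (Sum.inl (i, !x))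
    refine absurd this (not_le.mpr ?_)
    refine Finset.sum_lt_sum ?_ ⟨i, Finset.mem_univ _, ?_⟩
    · intro l _
      by_cases hl : l = i
      · subst hl
        refine Nat.pow_le_pow_right (by norm_num) ?_
        rw [hwtx' _ _ l x, Equiv.swap_apply_right, Equiv.swap_apply_of_ne_of_ne (by simp) (by simp),
          Sym2.eq_swap]
        exact hlt.le
      · rw [hwt, Equiv.swap_apply_of_ne_of_ne (by simp) (by simp [hl]),
          Equiv.swap_apply_of_ne_of_ne (by simp) (by simp [hl]), hwt0]
    · refine Nat.pow_lt_pow_right (by norm_num) ?_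
      rw [hwtx' _ _ i x, Equiv.swap_apply_right, Equiv.swap_apply_of_ne_of_ne (by simp) (by simp),
          Sym2.eq_swap]
      exact hlt
  -- of two complementary cross pairs at most one is lost
  have hll : ∀ i j x y, i ≠ j →
      tm s(v (Sum.inl (i, x)), v (Sum.inl (j, y))) < max (wt σ i) (wt σ j) →
      max (wt σ i) (wt σ j) ≤ tm s(v (Sum.inl (i, !x)), v (Sum.inl (j, !y))) := by
    intro i j x y hij hlt
    by_contra hlt2
    push Not at hlt2
    have := hswap (Sum.inl (i, !x)) (Sum.inl (j, y))
    refine absurd this (not_le.mpr ?_)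
    refine sum_two_lt _ _ i j hij ?_ ?_ ?_
    · intro l hli hlj
      rw [hwt, Equiv.swap_apply_of_ne_of_ne (by simp [hli]) (by simp [hlj]),
          Equiv.swap_apply_of_ne_of_ne (by simp [hli]) (by simp [hlj]), hwt0]
    · rw [hwtx' _ _ i x, Equiv.swap_apply_left, Equiv.swap_apply_of_ne_of_ne (by simp) (by simp [hij])]
      exact hlt
    · rw [hwtx' _ _ j y, Equiv.swap_apply_right,
        Equiv.swap_apply_of_ne_of_ne (by simp [hij.symm]) (by simp)]
      exact hlt2
  let lost : Sym2 (Lab k r) → Prop := fun z => ∃ a ∈ z, tm (z.map v) < τ a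
  let ND : Finset (Sym2 (Lab k r)) := Finset.univ.filter (fun z => ¬ z.IsDiag)
  have hND : ND.card = (2 * k + r).choose 2 := by
    rw [← card_Lab k r, ← Sym2.card_subtype_not_diag, Fintype.card_subtype]
  let φ : (Fin k × Fin k) × Bool → Sym2 (Lab k r) := fun q =>
    if lost s(Sum.inl (q.1.1, false), Sum.inl (q.1.2, q.2))
    then s(Sum.inl (q.1.1, false), Sum.inl (q.1.2, q.2))
    else s(Sum.inl (q.1.1, true), Sum.inl (q.1.2, !q.2))
  have hlost_iff : ∀ a b, lost s(a, b) ↔ (tm s(v a, v b) < τ a ∨ tm s(v a, v b) < τ b) := by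
    intro a b
    constructor
    · rintro ⟨c, hc, h⟩
      rcases Sym2.mem_iff.mp hc with rfl | rfl
      · exact Or.inl h
      · exact Or.inr h
    · rintro (h | h)
      · exact ⟨a, Sym2.mem_mk_left a b, h⟩
      · exact ⟨b, Sym2.mem_mk_right a b, h⟩
  have hcross : ∀ i j x y, i < j → lost s(Sum.inl (i, x), Sum.inl (j, y)) →
      s(Sum.inl (i, x), Sum.inl (j, y)) = φ ((i, j), xor x y) := by
    intro i j x y hij hl
    cases x
    · simp only [φ, Bool.false_xor, if_pos hl]
    · have : ¬ lost s(Sum.inl (i, false), Sum.inl (j, xor true y)) := by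
        rw [hlost_iff] at hl ⊢
        rw [hτl, hτl] at hl ⊢
        have := hll i j true y (ne_of_lt hij) (lt_max_iff.mpr hl)
        simp only [Bool.not_true] at this
        simp only [Bool.true_xor]
        have := max_le_iff.mp this
        omega
      simp only [φ, if_neg this]
      simp
  have hmem' : ∀ (i j : Fin k) (b : Bool), i < j → ((i, j), b) ∈
      ((Finset.univ : Finset (Fin k × Fin k)).filter (fun q => q.1 < q.2)) ×ˢ
          (Finset.univ : Finset Bool) := by
    intro i j b hij
    exact Finset.mem_product.mpr ⟨Finset.mem_filter.mpr ⟨Finset.mem_univ _, hij⟩, Finset.mem_univ _⟩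
  have hlostcard : (ND.filter lost).card ≤ k * (k - 1) := by
    have hsub : ND.filter lost ⊆
        (((Finset.univ : Finset (Fin k × Fin k)).filter (fun q => q.1 < q.2)) ×ˢ
          (Finset.univ : Finset Bool)).image φ := by
      intro z hz
      rw [Finset.mem_filter] at hz
      obtain ⟨hz1, hz2⟩ := hz
      have hz1 : ¬ z.IsDiag := by simpa [ND] using hz1
      induction z using Sym2.ind with
      | _ a b =>
      have hab : a ≠ b := by simpa using hz1
      have hz3 := (hlost_iff a b).mp hz2
      rcases a with ⟨i, x⟩ | u <;> rcases b with ⟨j, y⟩ | w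
      · rcases lt_trichotomy i j with hij | hij | hij
        · rw [hcross i j x y hij hz2]
          exact Finset.mem_image_of_mem _ (hmem' _ _ _ hij)
        · exfalso
          subst hij
          have : y = !x := by
            have : x ≠ y := fun h => hab (by rw [h])
            clear_value v τ wt
            revert this
            cases x <;> cases y <;> simp
          subst this
          rw [hτl, hτl, ← hwtx] at hz3
          omega
        · rw [Sym2.eq_swap] at hz2 ⊢
          rw [hcross j i y x hij hz2]
          exact Finset.mem_image_of_mem _ (hmem' _ _ _ hij)
      · exfalso
        rw [Sym2.eq_swap, hτl, hτr] at hz3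
        have := hrl w i x
        have := hft2 w (Sum.inl (i, x)) hab
        omega
      · exfalso
        rw [hτl, hτr] at hz3
        have := hrl u j y
        have := hft2 u (Sum.inl (j, y)) hab.symm
        omega
      · exfalso
        rw [hτr, hτr] at hz3
        have h1 := hft2 u (Sum.inr w) hab.symm
        have h2 := hft2 w (Sum.inr u) hab
        rw [Sym2.eq_swap (a := v (Sum.inr w)) (b := v (Sum.inr u))] at h2
        omega
    refine (Finset.card_le_card hsub).trans (Finset.card_image_le.trans ?_)
    rw [Finset.card_product]
    simpa using card_lt_pairs k
  refine ⟨v, vinj, fun a => (v0 (σ a)).2, τ, ?_, fun i x => rfl, ND.filter (fun z => ¬ lost z), ?_, ?_⟩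
  · rintro (⟨i, x⟩ | u)
    · exact ⟨Sum.inl (i, !x), by simp, by rw [hτl, hwtx i x]⟩
    · exact ⟨ft u, hft1 u, rfl⟩
  · rw [Dset, Finset.mem_filter]
    refine ⟨Finset.mem_univ _, ?_, ?_⟩
    · intro z hz
      have := (Finset.mem_filter.mp hz).1
      simpa [ND] using this
    · have := Finset.card_filter_add_card_filter_not (s := ND) lost
      omega
  · intro a b hab
    have := (Finset.mem_filter.mp hab).2
    rw [hlost_iff] at this
    omega

/-- One of the two endpoints of a pair. -/
noncomputable def endp (z : Sym2 ℕ) (b : Bool) : ℕ := if b then (Quot.out z).1 else (Quot.out z).2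

lemma exists_endp {z : Sym2 ℕ} {u : ℕ} (h : u ∈ z) : ∃ b, endp z b = u := by
  have hz : z = s((Quot.out z).1, (Quot.out z).2) := (Quot.out_eq z).symm
  rw [hz, Sym2.mem_iff] at h
  rcases h with h | h
  · exact ⟨true, h.symm⟩
  · exact ⟨false, h.symm⟩

/-- The vertex decoded from a time and an endpoint choice. -/
noncomputable def dec (B : List Bool → Sym2 ℕ) (t : ℕ) (b : Bool) (h : List Bool) : ℕ :=
  endp (B (h.take t)) b

/-- The next edge is a good edge for the code `(τ, s, D)`. -/
def good {ι : Type*} (B : List Bool → Sym2 ℕ) (τ : ι → ℕ) (s : ι → Bool) (D : Finset (Sym2 ι))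
    (h : List Bool) : Prop :=
  ∃ a b, s(a, b) ∈ D ∧ τ a ≤ h.length ∧ τ b ≤ h.length ∧
    B h = s(dec B (τ a) (s a) h, dec B (τ b) (s b) h)

/-- Times of the labels from a compressed code. -/
def codeTime {k r N : ℕ} (c : (Fin k → Fin N) × (Fin r → Fin N)) : Lab k r → ℕ :=
  Sum.elim (fun ix => (c.1 ix.1 : ℕ)) (fun u => (c.2 u : ℕ))

abbrev Codes (k r N : ℕ) := ((Fin k → Fin N) × (Fin r → Fin N)) × (Lab k r → Bool)

lemma clique_code {B : List Bool → Sym2 ℕ} (hB : ValidBuilder B) (col : Bool) (k r N : ℕ)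
    (h2 : 2 ≤ 2 * k + r) (ω : List Bool) (hω : ω.length = N)
    (hc : HasMonoClique (fun t => B (ω.take t)) (fun t => ω.getD t false) N (2 * k + r) col) :
    ∃ c : Codes k r N, ∃ D ∈ Dset k r, Evt col (good B (codeTime c.1) c.2 D) D.card ω := by
  classical
  obtain ⟨S, hS, hcl⟩ := hc
  have hdist : ∀ t t', t < N → t' < N → B (ω.take t) = B (ω.take t') → t = t' := by
    have aux : ∀ t t', t < t' → t' < N → B (ω.take t) ≠ B (ω.take t') := by
      intro t t' h1 h2
      have := hB.2 (ω.take t') t (by simp; omega)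
      rwa [List.take_take, min_eq_left h1.le] at this
    intro t t' h1 h2 h
    rcases lt_trichotomy t t' with h' | h' | h'
    · exact absurd h (aux _ _ h' h2)
    · exact h'
    · exact absurd h.symm (aux _ _ h' h1)
  have hex : ∀ z : Sym2 ℕ, ∃ t, (∃ u ∈ S, ∃ v ∈ S, u ≠ v ∧ z = s(u, v)) →
      t < N ∧ B (ω.take t) = z ∧ ω.getD t false = col := by
    intro z
    by_cases h : ∃ u ∈ S, ∃ v ∈ S, u ≠ v ∧ z = s(u, v)
    · obtain ⟨u, hu, v, hv, huv, rfl⟩ := h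
      obtain ⟨t, ht⟩ := hcl u hu v hv huv
      exact ⟨t, fun _ => ht⟩
    · exact ⟨0, fun h' => absurd h' h⟩
  choose tm htm using hex
  obtain ⟨v, vinj, vS, τ, hτ1, hτ2, D, hD, hDg⟩ := struct_matching k r h2 S hS tm
  have hv : ∀ a b, a ≠ b → tm s(v a, v b) < N ∧ B (ω.take (tm s(v a, v b))) = s(v a, v b) ∧
      ω.getD (tm s(v a, v b)) false = col := fun a b hab =>
    htm _ ⟨v a, vS a, v b, vS b, fun h => hab (vinj h), rfl⟩
  have hτN : ∀ a, τ a < N := by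
    intro a
    obtain ⟨b, hb, h⟩ := hτ1 a
    rw [h]; exact (hv a b hb.symm).1
  have hsx : ∀ a, ∃ b, endp (B (ω.take (τ a))) b = v a := by
    intro a
    obtain ⟨b, hb, h⟩ := hτ1 a
    apply exists_endp
    rw [h, (hv a b hb.symm).2.1]
    exact Sym2.mem_mk_left _ _
  choose sb hsb using hsx
  let c : Codes k r N := ((fun i => ⟨τ (Sum.inl (i, false)), hτN _⟩,
    fun u => ⟨τ (Sum.inr u), hτN _⟩), sb)
  have hct : codeTime c.1 = τ := by
    funext a
    rcases a with ⟨i, x⟩ | u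
    · exact (hτ2 i x).symm
    · rfl
  have hdec : ∀ a t, τ a ≤ t → dec B (τ a) (sb a) (ω.take t) = v a := by
    intro a t h
    rw [dec, List.take_take, min_eq_left h, hsb]
  have hDnd : ∀ z ∈ D, ¬ z.IsDiag := (Finset.mem_filter.mp hD).2.1
  refine ⟨c, D, hD, ?_⟩
  rw [hct]
  constructor
  · intro t ht hg
    obtain ⟨a, b, hab, hta, htb, hBe⟩ := hg
    have hl : (ω.take t).length = t := by simp; omega
    rw [hl] at hta htb
    have hc2 : c.2 = sb := rfl
    rw [hc2, hdec a t hta, hdec b t htb] at hBe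
    have hne : a ≠ b := by simpa using hDnd _ hab
    obtain ⟨h1, h2, h3⟩ := hv a b hne
    have := hdist t _ (by omega) h1 (hBe.trans h2.symm)
    rw [this]; exact h3
  · have hz : ∀ z ∈ D, tm (z.map v) < N ∧ B (ω.take (tm (z.map v))) = z.map v ∧
        good B τ sb D (ω.take (tm (z.map v))) := by
      intro z
      induction z using Sym2.ind with
      | _ a b =>
      intro hab
      have hne : a ≠ b := by simpa using hDnd _ hab
      obtain ⟨h1, h2, h3⟩ := hv a b hne
      obtain ⟨ha, hb⟩ := hDg a b hab
      have hl : (ω.take (tm s(v a, v b))).length = tm s(v a, v b) := by simp; omega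
      refine ⟨h1, h2, a, b, hab, ?_, ?_, ?_⟩
      · rw [Sym2.map_mk, hl]; exact ha
      · rw [Sym2.map_mk, hl]; exact hb
      · rw [Sym2.map_mk, hdec a _ ha, hdec b _ hb]; exact h2
    unfold Cnt
    rw [← Finset.card_filter]
    refine Finset.card_le_card_of_injOn (fun z => tm (z.map v)) ?_ ?_
    · intro z hzD
      have := hz z hzD
      rw [Finset.mem_coe, Finset.mem_filter, Finset.mem_range, hω]
      exact ⟨this.1, this.2.2⟩
    · intro z hzD w hwD h
      have e1 := (hz z hzD).2.1
      have e2 := (hz w hwD).2.1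
      have h' : tm (z.map v) = tm (w.map v) := h
      rw [h', e2] at e1
      exact (Sym2.map.injective vinj e1).symm

lemma clique_bound {p : ℝ} (h0 : 0 ≤ p) (h1 : p ≤ 1) {B : List Bool → Sym2 ℕ}
    (hB : ValidBuilder B) (col : Bool) (k r N : ℕ) (h2 : 2 ≤ 2 * k + r) :
    Ex p N (fun ω => if HasMonoClique (fun t => B (ω.take t)) (fun t => ω.getD t false) N
      (2 * k + r) col then (1:ℝ) else 0) ≤
    ((N:ℝ) ^ (k + r) * 2 ^ (2 * k + r) * (Dset k r).card) *
      (qq p col) ^ ((2 * k + r).choose 2 - k * (k - 1)) := by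
  have hq0 : 0 ≤ qq p col := by unfold qq; split_ifs <;> linarith
  have hq1 : qq p col ≤ 1 := by unfold qq; split_ifs <;> linarith
  let s : Finset (Codes k r N × Finset (Sym2 (Lab k r))) := Finset.univ ×ˢ Dset k r
  calc _ ≤ Ex p N (fun ω => ∑ i ∈ s,
        if Evt col (good B (codeTime i.1.1) i.1.2 i.2) i.2.card ω then (1:ℝ) else 0) := by
        apply Ex_mono h0 h1
        intro ω hω
        have hnn : ∀ i ∈ s, (0:ℝ) ≤
          if Evt col (good B (codeTime i.1.1) i.1.2 i.2) i.2.card ω then (1:ℝ) else 0 := by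
          intro i _; split_ifs <;> norm_num
        split_ifs with hc
        · obtain ⟨c, D, hD, hE⟩ := clique_code hB col k r N h2 ω hω hc
          have := Finset.single_le_sum hnn (a := (c, D)) (by simp [s, hD])
          simpa only [if_pos hE] using this
        · exact Finset.sum_nonneg hnn
    _ = ∑ i ∈ s, Ex p N (fun ω =>
        if Evt col (good B (codeTime i.1.1) i.1.2 i.2) i.2.card ω then (1:ℝ) else 0) := Ex_sum _ _ _
    _ ≤ ∑ i ∈ s, (qq p col) ^ ((2 * k + r).choose 2 - k * (k - 1)) := by
        apply Finset.sum_le_sum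
        intro i hi
        refine (Ex_Evt h0 h1 col N _ _).trans ?_
        apply pow_le_pow_of_le_one hq0 hq1
        have := (Finset.mem_product.mp hi).2
        have := (Finset.mem_filter.mp this).2.2
        omega
    _ = _ := by
        rw [Finset.sum_const, nsmul_eq_mul]
        congr 1
        simp only [s, Finset.card_product, Finset.card_univ, Fintype.card_prod, Fintype.card_fun,
          Fintype.card_fin, card_Lab, Fintype.card_bool]
        push_cast
        ring

lemma histOf_list (ω : List Bool) (t : ℕ) (ht : t ≤ ω.length) :
    histOf (fun h => ω.getD h.length false) t = ω.take t := by
  induction t with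
  | zero => rfl
  | succ t ih =>
    rw [histOf, ih (by omega), List.take_add_one]
    have hl : (ω.take t).length = t := by simp; omega
    rw [hl]
    have : t < ω.length := by omega
    simp [List.getD, this]

lemma Dset_zero (r : ℕ) : (Dset 0 r).card ≤ 1 := by
  classical
  rw [Finset.card_le_one]
  have key : ∀ D ∈ Dset 0 r, D = Finset.univ.filter (fun z => ¬ z.IsDiag) := by
    intro D hD
    obtain ⟨-, h1, h2⟩ := Finset.mem_filter.mp hD
    have hND : (Finset.univ.filter (fun z : Sym2 (Lab 0 r) => ¬ z.IsDiag)).card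
        = (2 * 0 + r).choose 2 := by
      rw [← card_Lab 0 r, ← Sym2.card_subtype_not_diag, Fintype.card_subtype]
    apply Finset.eq_of_subset_of_card_le
    · intro z hz; exact Finset.mem_filter.mpr ⟨Finset.mem_univ _, h1 z hz⟩
    · rw [hND]; simpa using h2
  intro D hD D' hD'
  rw [key D hD, key D' hD']

lemma not_builderWins {p : ℝ} (h0 : 0 ≤ p) (h1 : p ≤ 1) (k r n N : ℕ) (hm : 2 ≤ 2 * k + r)
    (hn : 2 ≤ n)
    (hred : ((N:ℝ) ^ (k + r) * 2 ^ (2 * k + r) * (Dset k r).card) *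
      p ^ ((2 * k + r).choose 2 - k * (k - 1)) < 1 / 2)
    (hblue : (N:ℝ) ^ n * 2 ^ n * (1 - p) ^ (n.choose 2) ≤ 1 / 2) :
    ¬ BuilderWins (2 * k + r) n N := by
  rintro ⟨B, hB, hwin⟩
  have e1 := clique_bound h0 h1 hB true k r N hm
  have e2 := clique_bound h0 h1 hB false 0 n N (by omega)
  have hlt : Ex p N (fun _ => (1:ℝ)) <  1 := by
    calc Ex p N (fun _ => (1:ℝ)) ≤ _ := Ex_mono h0 h1 N _ (fun ω =>
          (if HasMonoClique (fun t => B (ω.take t)) (fun t => ω.getD t false) N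
            (2 * k + r) true then (1:ℝ) else 0) +
          (if HasMonoClique (fun t => B (ω.take t)) (fun t => ω.getD t false) N
            (2 * 0 + n) false then (1:ℝ) else 0)) ?_
      _ = _ := Ex_add _ _ _
      _ < 1 := ?_
    · intro ω hω
      have hw := hwin (fun h => ω.getD h.length false)
      have conv : ∀ (K : ℕ) (col : Bool),
          HasMonoClique (fun t => B (histOf (fun h => ω.getD h.length false) t))
            (fun t => ω.getD (histOf (fun h => ω.getD h.length false) t).length false) N K col →
          HasMonoClique (fun t => B (ω.take t)) (fun t => ω.getD t false) N K col := by
        rintro K col ⟨S, hS, h⟩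
        refine ⟨S, hS, fun u hu v hv huv => ?_⟩
        obtain ⟨t, ht, h3, h4⟩ := h u hu v hv huv
        refine ⟨t, ht, ?_, ?_⟩
        · simp only at h3 ⊢
          rwa [histOf_list ω t (by omega)] at h3
        · simp only at h4 ⊢
          rwa [histOf_length] at h4
      rcases hw with hw | hw
      · rw [if_pos (conv _ _ hw)]
        split_ifs <;> norm_num
      · have := conv _ _ hw
        rw [show n = 2 * 0 + n by omega] at this
        rw [if_pos this]
        split_ifs <;> norm_num
    · have hD : ((Dset 0 n).card : ℝ) ≤ 1 := by exact_mod_cast Dset_zero n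
      have e3 : ((N:ℝ) ^ (0 + n) * 2 ^ (2 * 0 + n) * (Dset 0 n).card) *
          (qq p false) ^ ((2 * 0 + n).choose 2 - 0 * (0 - 1)) ≤ 1 / 2 := by
        refine le_trans ?_ hblue
        simp only [qq, zero_add, mul_zero, zero_mul, Nat.sub_zero, Bool.false_eq_true, if_false]
        have : (0:ℝ) ≤ (1 - p) ^ n.choose 2 := pow_nonneg (by linarith) _
        have h5 : (0:ℝ) ≤ (N:ℝ) ^ n * 2 ^ n := by positivity
        nlinarith [mul_nonneg h5 this]
      simp only [qq, if_true] at e1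
      linarith
  rw [Ex_const] at hlt
  exact lt_irrefl _ hlt

lemma blue_eventually (m : ℕ) (hm : 3 ≤ m) :
    ∀ᶠ n : ℕ in Filter.atTop,
      2 * (n:ℝ) ^ m * Real.exp (-((n:ℝ) ^ (1 / (m:ℝ)) / 4)) ≤ 1 / 2 := by
  have hm0 : (0:ℝ) < m := by exact_mod_cast (by omega : 0 < m)
  have t1 : Filter.Tendsto (fun n : ℕ => (n:ℝ) ^ (1 / (m:ℝ)) / 4) Filter.atTop Filter.atTop :=
    ((tendsto_rpow_atTop (by positivity)).comp tendsto_natCast_atTop_atTop).atTop_div_const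
      (by norm_num)
  have t2 := (Real.tendsto_pow_mul_exp_neg_atTop_nhds_zero (m * m)).comp t1
  have ev := t2.eventually (gt_mem_nhds (show (0:ℝ) < 1 / (4 * 4 ^ (m * m)) by positivity))
  filter_upwards [ev] with n hn
  simp only [Function.comp] at hn
  have e : ((n:ℝ) ^ (1 / (m:ℝ))) ^ (m * m) = (n:ℝ) ^ m := by
    rw [pow_mul, ← Real.rpow_natCast ((n:ℝ) ^ (1 / (m:ℝ))) m, ← Real.rpow_mul (by positivity),
      one_div, inv_mul_cancel₀ hm0.ne', Real.rpow_one]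
  rw [div_pow, e] at hn
  rw [lt_div_iff₀ (by positivity)] at hn
  have h4 : (0:ℝ) < 4 ^ (m * m) := by positivity
  have : (n:ℝ) ^ m / 4 ^ (m * m) * Real.exp (-((n:ℝ) ^ (1 / (m:ℝ)) / 4)) * (4 * 4 ^ (m * m)) =
      4 * ((n:ℝ) ^ m * Real.exp (-((n:ℝ) ^ (1 / (m:ℝ)) / 4))) := by
    field_simp
  rw [this] at hn
  nlinarith

lemma exponent_bound (m k : ℝ) (hm : 3 ≤ m) (Q : ℝ)
    (hk0 : 0 ≤ k * (k - 1)) (hkp : 0 ≤ k) (hk1 : k ≤ (2 - Real.sqrt 2) * m / 2)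
    (hk2 : (2 - Real.sqrt 2) * m / 2 < k + 1) (hQ : m * (m - 1) / 2 - k * (k - 1) ≤ Q) :
    ((2 - Real.sqrt 2) * m - 4) * (m - k) + (-(1 - 1 / m)) * Q ≤ -1 := by
  set s := Real.sqrt 2 with hs
  have hs2 : s * s = 2 := Real.mul_self_sqrt (by norm_num)
  have hs1 : 1 ≤ s := by rw [hs]; exact Real.one_le_sqrt.mpr (by norm_num)
  have hm0 : 0 < m := by linarith
  have hinv : 1 / m ≤ 1 := by rw [div_le_one hm0]; linarith
  have a1 : (-(1 - 1 / m)) * Q ≤ (-(1 - 1 / m)) * (m * (m - 1) / 2 - k * (k - 1)) :=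
    mul_le_mul_of_nonpos_left hQ (by linarith)
  have a2 : (-(1 - 1 / m)) * (m * (m - 1) / 2 - k * (k - 1)) =
      -(m * (m - 1) / 2 - k * (k - 1)) + (m - 1) / 2 - 1 / m * (k * (k - 1)) := by
    field_simp
    ring
  have a3 : 0 ≤ 1 / m * (k * (k - 1)) := by positivity
  have hk3 : k ≤ m / 2 := by nlinarith
  have hth : ((2 - s) * m / 2 - k) ^ 2 ≤ 1 := by nlinarith
  have id1 : (2 - s) * m * (m - k) - m * (m - 1) / 2 + k * (k - 1) =
      ((2 - s) * m / 2 - k) ^ 2 + m / 2 - k := by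
    linear_combination (-(m ^ 2) / 4) * hs2
  nlinarith

theorem stmt2 :
    ∃ C : ℝ, 0 < C ∧ ∀ m : ℕ, 3 ≤ m → ∃ n₀ : ℕ, ∀ n : ℕ, n₀ ≤ n →
      (n : ℝ) ^ ((2 - Real.sqrt 2) * (m : ℝ) - C) ≤ (onlineRamsey m n : ℝ) := by
  refine ⟨4, by norm_num, fun m hm => ?_⟩
  have hs2 : Real.sqrt 2 * Real.sqrt 2 = 2 := Real.mul_self_sqrt (by norm_num)
  have hs1 : 1 ≤ Real.sqrt 2 := Real.one_le_sqrt.mpr (by norm_num)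
  have hs3 : Real.sqrt 2 ≤ 2 := by nlinarith
  have hm3 : (3:ℝ) ≤ m := by exact_mod_cast hm
  have hm0 : (0:ℝ) < m := by linarith
  have hα0 : 0 ≤ (2 - Real.sqrt 2) * (m:ℝ) / 2 := by
    have : 0 ≤ 2 - Real.sqrt 2 := by linarith
    positivity
  set k := ⌊(2 - Real.sqrt 2) * (m:ℝ) / 2⌋₊ with hk
  have hk1 : (k:ℝ) ≤ (2 - Real.sqrt 2) * (m:ℝ) / 2 := Nat.floor_le hα0
  have hk2 : (2 - Real.sqrt 2) * (m:ℝ) / 2 < k + 1 := Nat.lt_floor_add_one _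
  have hkm : 2 * k ≤ m := by
    have : (2:ℝ) * k ≤ m := by nlinarith
    exact_mod_cast this
  obtain ⟨r, hr⟩ : ∃ r, m = 2 * k + r := ⟨m - 2 * k, by omega⟩
  clear_value k
  have ev3 := (tendsto_natCast_atTop_atTop (R := ℝ)).eventually
    (Filter.eventually_gt_atTop (2 * (2 ^ (2 * k + r) * ((Dset k r).card : ℝ))))
  obtain ⟨n₀, hn₀⟩ := Filter.eventually_atTop.mp
    ((blue_eventually m hm).and (ev3.and (Filter.eventually_ge_atTop 2)))
  refine ⟨n₀, fun n hn => ?_⟩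
  obtain ⟨hbl, hK, hn2⟩ := hn₀ n hn
  by_contra hlt
  push Not at hlt
  have hwin : BuilderWins m n (onlineRamsey m n) := Nat.sInf_mem (exists_builderWins m n)
  set N := onlineRamsey m n with hN
  have hn2' : (2:ℝ) ≤ n := by exact_mod_cast hn2
  have hn0 : (0:ℝ) < n := by linarith
  have hn1 : (1:ℝ) ≤ n := by linarith
  set p : ℝ := (n:ℝ) ^ (-(1 - 1 / (m:ℝ))) with hp
  have hinv : 1 / (m:ℝ) ≤ 1 := by rw [div_le_one hm0]; linarith
  have hp0 : 0 ≤ p := by positivity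
  have hp1 : p ≤ 1 := Real.rpow_le_one_of_one_le_of_nonpos hn1 (by linarith)
  rw [hr] at hwin
  refine not_builderWins hp0 hp1 k r n N (by omega) hn2 ?_ ?_ hwin
  · have hN1 : (N:ℝ) ^ (k + r) ≤ (n:ℝ) ^ (((2 - Real.sqrt 2) * (m:ℝ) - 4) * ((m:ℝ) - k)) := by
      have e : (m:ℝ) - k = ((k + r : ℕ) : ℝ) := by rw [hr]; push_cast; ring
      rw [e, Real.rpow_mul hn0.le, Real.rpow_natCast]
      exact pow_le_pow_left₀ (by positivity) hlt.le _
    set Q := (2 * k + r).choose 2 - k * (k - 1) with hQ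
    have hkk : ((k * (k - 1) : ℕ) : ℝ) = (k:ℝ) * (k - 1) := by
      rcases Nat.eq_zero_or_pos k with h | h
      · simp [h]
      · rw [Nat.cast_mul, Nat.cast_sub h, Nat.cast_one]
    have hQr : (m:ℝ) * (m - 1) / 2 - k * (k - 1) ≤ (Q:ℝ) := by
      rw [← hkk, ← Nat.cast_choose_two, hr]
      have : (2 * k + r).choose 2 ≤ Q + k * (k - 1) := by omega
      have : (((2 * k + r).choose 2 : ℕ) : ℝ) ≤ Q + (k * (k - 1) : ℕ) := by exact_mod_cast this
      linarith
    have hpQ : p ^ Q = (n:ℝ) ^ ((-(1 - 1 / (m:ℝ))) * Q) := by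
      rw [hp, Real.rpow_mul hn0.le, Real.rpow_natCast]
    have hkk0 : (0:ℝ) ≤ (k:ℝ) * (k - 1) := by rw [← hkk]; positivity
    have hexp := exponent_bound m k hm3 Q hkk0 (by positivity) hk1 hk2 hQr
    have hprod : (N:ℝ) ^ (k + r) * p ^ Q ≤ (n:ℝ)⁻¹ := by
      calc _ ≤ (n:ℝ) ^ (((2 - Real.sqrt 2) * (m:ℝ) - 4) * ((m:ℝ) - k)) *
            (n:ℝ) ^ ((-(1 - 1 / (m:ℝ))) * Q) := by
            rw [hpQ]; gcongr
        _ = (n:ℝ) ^ (((2 - Real.sqrt 2) * (m:ℝ) - 4) * ((m:ℝ) - k) + (-(1 - 1 / (m:ℝ))) * Q) :=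
            (Real.rpow_add hn0 _ _).symm
        _ ≤ (n:ℝ) ^ (-1:ℝ) := Real.rpow_le_rpow_of_exponent_le hn1 hexp
        _ = _ := Real.rpow_neg_one _
    calc (N:ℝ) ^ (k + r) * 2 ^ (2 * k + r) * ((Dset k r).card : ℝ) * p ^ Q
        = ((N:ℝ) ^ (k + r) * p ^ Q) * (2 ^ (2 * k + r) * ((Dset k r).card : ℝ)) := by ring
      _ ≤ (n:ℝ)⁻¹ * (2 ^ (2 * k + r) * ((Dset k r).card : ℝ)) := 
          mul_le_mul_of_nonneg_right hprod (mul_nonneg (pow_nonneg (by norm_num) _) (Nat.cast_nonneg _))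
      _ < 1 / 2 := by
          rw [inv_mul_lt_iff₀ hn0]; linarith
  · have hNm : (N:ℝ) ≤ (n:ℝ) ^ m := by
      refine hlt.le.trans ?_
      rw [← Real.rpow_natCast]
      apply Real.rpow_le_rpow_of_exponent_le hn1
      nlinarith
    have hpn : (n:ℝ) ^ (1 / (m:ℝ)) = p * n := by
      rw [hp]
      nth_rewrite 3 [← Real.rpow_one (n:ℝ)]
      rw [← Real.rpow_add hn0]
      congr 1; ring
    have hexp : (1 - p) ^ (n.choose 2) ≤ (Real.exp (-(p * n / 4))) ^ n := by
      calc (1 - p) ^ (n.choose 2) ≤ (Real.exp (-p)) ^ (n.choose 2) :=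
            pow_le_pow_left₀ (by linarith) (Real.one_sub_le_exp_neg p) _
        _ = Real.exp ((n.choose 2 : ℕ) * (-p)) := (Real.exp_nat_mul _ _).symm
        _ ≤ Real.exp (n * (-(p * n / 4))) := by
            apply Real.exp_le_exp.mpr
            rw [Nat.cast_choose_two]
            have : 0 ≤ p * n * (n - 2) := mul_nonneg (by positivity) (by linarith)
            nlinarith
        _ = _ := Real.exp_nat_mul _ _
    rw [hpn] at hbl
    calc (N:ℝ) ^ n * 2 ^ n * (1 - p) ^ (n.choose 2)
        ≤ ((n:ℝ) ^ m) ^ n * 2 ^ n * (Real.exp (-(p * n / 4))) ^ n := by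
          have : 0 ≤ 1 - p := by linarith
          gcongr
      _ = (2 * (n:ℝ) ^ m * Real.exp (-(p * n / 4))) ^ n := by
          rw [mul_pow, mul_pow]; ring
      _ ≤ (1 / 2) ^ n := pow_le_pow_left₀ (by positivity) hbl _
      _ ≤ (1 / 2) ^ 1 := pow_le_pow_of_le_one (by norm_num) (by norm_num) (by omega)
      _ = 1 / 2 := by norm_num

end OnlineRamseyGame
end

section
/- For every fixed integer m ≥ 3 there exist a constant C_m > 0 and n₀ such that for all n ≥ n₀, the online Ramsey number satisfies r̃(m,n) ≤ C_m · n^m/(log n)^(⌊m/2⌋ − 1), where log denotes the natural logarithm. -/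
open scoped Classical

namespace OnlineRamseyGame

/-! ### Hard-core model -/

/-- independent subsets of `X` -/
noncomputable def ind {α : Type*} (G : SimpleGraph α) (X : Finset α) : Finset (Finset α) :=
  X.powerset.filter (fun S => ∀ u ∈ S, ∀ w ∈ S, ¬ G.Adj u w)

theorem mem_ind {α : Type*} {G : SimpleGraph α} {X S : Finset α} :
    S ∈ ind G X ↔ S ⊆ X ∧ ∀ u ∈ S, ∀ w ∈ S, ¬ G.Adj u w := by
  simp [ind]

theorem Z_le {α : Type*} (G : SimpleGraph α) (X : Finset α) (l : ℝ) (hl : 0 ≤ l) :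
    ∑ S ∈ ind G X, l ^ S.card ≤ Real.exp (l * X.card) := by
  calc ∑ S ∈ ind G X, l ^ S.card ≤ ∑ S ∈ X.powerset, l ^ S.card :=
        Finset.sum_le_sum_of_subset_of_nonneg (Finset.filter_subset _ _)
          (fun _ _ _ => by positivity)
    _ = (l + 1) ^ X.card := by
        have := Finset.sum_pow_mul_eq_add_pow l 1 X
        simpa using this
    _ ≤ (Real.exp l) ^ X.card := by
        gcongr
        exact Real.add_one_le_exp l
    _ = _ := by rw [← Real.exp_nat_mul, mul_comm]

theorem one_le_Z {α : Type*} (G : SimpleGraph α) (X : Finset α) (l : ℝ) (hl : 0 ≤ l) :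
    1 ≤ ∑ S ∈ ind G X, l ^ S.card := by
  have h : (∅ : Finset α) ∈ ind G X := by simp [mem_ind]
  have := Finset.single_le_sum (f := fun S : Finset α => l ^ S.card)
    (fun _ _ => by positivity) h
  simpa using this

theorem occ {α : Type*} (G : SimpleGraph α) (X : Finset α) (l D : ℝ) (hl : 0 ≤ l)
    (hl1 : l ≤ 1) (hlD : l * D ≤ 1)
    (hdeg : ∀ u ∈ X, ((X.filter (fun w => G.Adj u w)).card : ℝ) ≤ D) :
    l * X.card / 3 * ∑ S ∈ ind G X, l ^ S.card ≤ ∑ S ∈ ind G X, (S.card : ℝ) * l ^ S.card := by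
  set Z := ∑ S ∈ ind G X, l ^ S.card with hZ
  set M := ∑ S ∈ ind G X, (S.card : ℝ) * l ^ S.card with hM
  let p : α → ℝ := fun u => ∑ S ∈ (ind G X).filter (fun S => u ∈ S), l ^ S.card
  have hp0 : ∀ u, 0 ≤ p u := fun u => Finset.sum_nonneg (fun _ _ => by positivity)
  let N : α → Finset α := fun u => insert u (X.filter (fun w => G.Adj u w))
  have hsub : ∀ S ∈ ind G X, S ⊆ X := fun S hS => (mem_ind.1 hS).1
  have hMp : M = ∑ u ∈ X, p u := by
    simp only [p, Finset.sum_filter]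
    rw [Finset.sum_comm, hM]
    refine Finset.sum_congr rfl fun S hS => ?_
    rw [← Finset.sum_filter, Finset.sum_const, nsmul_eq_mul]
    congr 2
    rw [Finset.filter_mem_eq_inter, Finset.inter_eq_right.2 (hsub S hS)]
  have key : ∀ u ∈ X, l * (Z - ∑ w ∈ N u, p w) ≤ p u := by
    intro u hu
    have h1 : Z - ∑ w ∈ N u, p w ≤
        ∑ S ∈ (ind G X).filter (fun S => Disjoint S (N u)), l ^ S.card := by
      simp only [p, Finset.sum_filter]
      rw [Finset.sum_comm, hZ, ← Finset.sum_sub_distrib]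
      refine Finset.sum_le_sum fun S hS => ?_
      rw [← Finset.sum_filter, Finset.sum_const, nsmul_eq_mul]
      have hpos : 0 ≤ l ^ S.card := by positivity
      split_ifs with hd
      · have : 0 ≤ ((((N u).filter (fun w => w ∈ S)).card : ℝ)) * l ^ S.card := by positivity
        linarith
      · have : 1 ≤ ((N u).filter (fun w => w ∈ S)).card := by
          rw [Finset.not_disjoint_iff] at hd
          obtain ⟨a, ha, hb⟩ := hd
          exact Finset.card_pos.2 ⟨a, by simp [ha, hb]⟩
        have : (1 : ℝ) ≤ ((N u).filter (fun w => w ∈ S)).card := by exact_mod_cast this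
        nlinarith
    have h2 : l * ∑ S ∈ (ind G X).filter (fun S => Disjoint S (N u)), l ^ S.card ≤ p u := by
      rw [Finset.mul_sum]
      have hinj : Set.InjOn (fun S : Finset α => insert u S)
          ((ind G X).filter (fun S => Disjoint S (N u)) : Finset (Finset α)) := by
        intro S hS T hT h
        have hS' : u ∉ S := by
          have := (Finset.mem_filter.1 hS).2
          exact fun h => Finset.disjoint_left.1 this h (by simp [N])
        have hT' : u ∉ T := by
          have := (Finset.mem_filter.1 hT).2
          exact fun h => Finset.disjoint_left.1 this h (by simp [N])
        have := congrArg (fun W => W.erase u) h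
        simpa [hS', hT'] using this
      calc _ = ∑ S ∈ ((ind G X).filter (fun S => Disjoint S (N u))).image (fun S => insert u S),
              l ^ S.card := by
            rw [Finset.sum_image hinj]
            refine Finset.sum_congr rfl fun S hS => ?_
            have hS' : u ∉ S := by
              have := (Finset.mem_filter.1 hS).2
              exact fun h => Finset.disjoint_left.1 this h (by simp [N])
            rw [Finset.card_insert_of_notMem hS', pow_succ, mul_comm]
        _ ≤ p u := by
            refine Finset.sum_le_sum_of_subset_of_nonneg ?_ (fun _ _ _ => by positivity)
            intro T hT
            obtain ⟨S, hS, rfl⟩ := Finset.mem_image.1 hT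
            rw [Finset.mem_filter, mem_ind] at hS
            obtain ⟨⟨hSX, hSi⟩, hd⟩ := hS
            rw [Finset.mem_filter, mem_ind]
            have hn : ∀ w ∈ S, ¬ G.Adj u w := fun w hw ha =>
              Finset.disjoint_left.1 hd hw (by simp [N, ha, hSX hw])
            refine ⟨⟨Finset.insert_subset hu hSX, ?_⟩, Finset.mem_insert_self _ _⟩
            intro a ha b hb
            rcases Finset.mem_insert.1 ha with rfl | ha' <;>
            rcases Finset.mem_insert.1 hb with rfl | hb'
            · exact G.loopless.irrefl _
            · exact hn b hb'
            · exact fun h => hn a ha' h.symm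
            · exact hSi a ha' b hb'
    exact (mul_le_mul_of_nonneg_left h1 hl).trans h2
  have hsum := Finset.sum_le_sum key
  rw [← hMp, ← Finset.mul_sum, Finset.sum_sub_distrib, Finset.sum_const, nsmul_eq_mul] at hsum
  have hdbl : ∑ u ∈ X, ∑ w ∈ N u, p w ≤ (D + 1) * M := by
    have e1 : ∑ u ∈ X, ∑ w ∈ N u, p w
        = ∑ u ∈ X, (p u + ∑ w ∈ X, if G.Adj u w then p w else 0) := by
      refine Finset.sum_congr rfl fun u hu => ?_
      rw [Finset.sum_insert (by simp), Finset.sum_filter]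
    rw [e1, Finset.sum_add_distrib, Finset.sum_comm, ← hMp]
    have : ∑ w ∈ X, ∑ u ∈ X, (if G.Adj u w then p w else 0) ≤ D * M := by
      rw [hMp, Finset.mul_sum]
      refine Finset.sum_le_sum fun w hw => ?_
      rw [← Finset.sum_filter, Finset.sum_const, nsmul_eq_mul]
      refine mul_le_mul_of_nonneg_right ?_ (hp0 w)
      simpa [G.adj_comm] using hdeg w hw
    linarith
  have hM0 : 0 ≤ M := Finset.sum_nonneg (fun _ _ => by positivity)
  have h3 : l * ∑ u ∈ X, ∑ w ∈ N u, p w ≤ l * ((D + 1) * M) :=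
    mul_le_mul_of_nonneg_left hdbl hl
  have h4 : l * D * M ≤ 1 * M := mul_le_mul_of_nonneg_right hlD hM0
  have h5 : l * M ≤ 1 * M := mul_le_mul_of_nonneg_right hl1 hM0
  nlinarith

theorem fiber {α : Type*} (G : SimpleGraph α) (A : Finset α) (v : α) (hv : v ∈ A)
    (g : Finset α → ℝ) (J : Finset α) (hJ : J ∈ ind G A) (hJv : v ∉ J)
    (hJn : ∀ w ∈ J, ¬ G.Adj v w) :
    ∑ I ∈ (ind G A).filter (fun I => I.filter (fun w => w ≠ v ∧ ¬ G.Adj v w) = J), g I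
      = g (insert v J) + ∑ S ∈ ind G (A.filter (fun u => G.Adj v u ∧ ∀ w ∈ J, ¬ G.Adj u w)),
          g (J ∪ S) := by
  set X := A.filter (fun u => G.Adj v u ∧ ∀ w ∈ J, ¬ G.Adj u w) with hX
  rw [mem_ind] at hJ
  have hinj : Set.InjOn (fun S : Finset α => J ∪ S) (ind G X : Finset (Finset α)) := by
    intro S hS T hT h
    have hd : ∀ S ∈ ind G X, (J ∪ S) \ J = S := by
      intro S hS
      rw [mem_ind] at hS
      rw [Finset.union_sdiff_left, Finset.sdiff_eq_self_iff_disjoint, Finset.disjoint_left]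
      intro a ha haJ
      have := hS.1 ha
      rw [hX, Finset.mem_filter] at this
      exact hJn a haJ this.2.1
    rw [← hd S hS, ← hd T hT]
    exact congrArg (fun W => W \ J) h
  rw [← Finset.sum_image (f := g) hinj, ← Finset.sum_insert (f := g)]
  · refine Finset.sum_congr ?_ fun _ _ => rfl
    ext I
    simp only [Finset.mem_filter, Finset.mem_insert, Finset.mem_image, mem_ind]
    constructor
    · rintro ⟨⟨hIA, hI⟩, rfl⟩
      by_cases hvI : v ∈ I
      · left
        ext a
        simp only [Finset.mem_insert, Finset.mem_filter]
        have := hI v hvI a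
        by_cases hav : a = v
        · subst hav; simp [hvI]
        · simp only [hav, false_or]; tauto
      · right
        refine ⟨I.filter (fun w => G.Adj v w), ⟨?_, ?_⟩, ?_⟩
        · intro a ha
          rw [Finset.mem_filter] at ha
          simp only [hX, Finset.mem_filter]
          exact ⟨hIA ha.1, ha.2, fun w hw => hI a ha.1 w hw.1⟩
        · intro a ha b hb
          exact hI a (Finset.mem_filter.1 ha).1 b (Finset.mem_filter.1 hb).1
        · ext a
          simp only [Finset.mem_union, Finset.mem_filter]
          have : a ∈ I → a ≠ v := fun h h' => hvI (h' ▸ h)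
          tauto
    · rintro (rfl | ⟨S, ⟨hSX, hS⟩, rfl⟩)
      · refine ⟨⟨Finset.insert_subset hv hJ.1, ?_⟩, ?_⟩
        · intro a ha b hb
          rcases Finset.mem_insert.1 ha with rfl | ha' <;>
          rcases Finset.mem_insert.1 hb with rfl | hb'
          · exact G.loopless.irrefl _
          · exact hJn b hb'
          · exact fun h => hJn a ha' h.symm
          · exact hJ.2 a ha' b hb'
        · ext a
          simp only [Finset.mem_filter, Finset.mem_insert]
          have h1 : a ∈ J → a ≠ v := fun h h' => hJv (h' ▸ h)
          have h2 := hJn a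
          tauto
      · have hSX' : ∀ a ∈ S, a ∈ A ∧ G.Adj v a ∧ ∀ w ∈ J, ¬ G.Adj a w := by
          intro a ha
          have := hSX ha
          rwa [hX, Finset.mem_filter] at this
        refine ⟨⟨Finset.union_subset hJ.1 fun a ha => (hSX' a ha).1, ?_⟩, ?_⟩
        · intro a ha b hb
          rcases Finset.mem_union.1 ha with ha | ha <;>
          rcases Finset.mem_union.1 hb with hb | hb
          · exact hJ.2 a ha b hb
          · exact fun h => (hSX' b hb).2.2 a ha h.symm
          · exact (hSX' a ha).2.2 b hb
          · exact hS a ha b hb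
        · ext a
          simp only [Finset.mem_filter, Finset.mem_union]
          have h1 : a ∈ J → a ≠ v := fun h h' => hJv (h' ▸ h)
          have h2 := hJn a
          have h3 := hSX' a
          tauto
  · intro h
    obtain ⟨S, hS, h⟩ := Finset.mem_image.1 h
    have hvm : v ∈ J ∪ S := by
      have h' : J ∪ S = insert v J := h
      rw [h']; simp
    rcases Finset.mem_union.1 hvm with h | h
    · exact hJv h
    · have := (mem_ind.1 hS).1 h
      rw [hX, Finset.mem_filter] at this
      exact G.loopless.irrefl _ this.2.1

theorem local_ineq {α : Type*} (G : SimpleGraph α) (X : Finset α) (d D : ℝ) (hD : 1 ≤ D)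
    (hdD : D ≤ d)
    (hdeg : ∀ u ∈ X, ((X.filter (fun w => G.Adj u w)).card : ℝ) ≤ D) :
    Real.log (d / D) / 12 * (1 / D + ∑ S ∈ ind G X, (1 / D) ^ S.card) ≤
      1 / D * d + ∑ S ∈ ind G X, (S.card : ℝ) * (1 / D) ^ S.card := by
  have hD0 : 0 < D := by linarith
  set l := 1 / D with hl
  have hl0 : 0 ≤ l := by positivity
  have hl1 : l ≤ 1 := by rw [hl, div_le_one hD0]; exact hD
  have hlD : l * D ≤ 1 := by rw [hl, one_div_mul_cancel hD0.ne']
  have hocc := occ G X l D hl0 hl1 hlD hdeg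
  have hZ1 := one_le_Z G X l hl0
  have hZe := Z_le G X l hl0
  set Z := ∑ S ∈ ind G X, l ^ S.card
  set M := ∑ S ∈ ind G X, (S.card : ℝ) * l ^ S.card
  set t := d / D with ht
  have ht1 : 1 ≤ t := by rw [ht, one_le_div hD0]; exact hdD
  have htl : l * d = t := by rw [hl, ht]; ring
  have hlog : 0 ≤ Real.log t := Real.log_nonneg ht1
  set y := l * X.card
  have hy0 : 0 ≤ y := by positivity
  have h1 : Real.log t / 12 * (l + Z) ≤ Real.log t / 6 * Z := by nlinarith
  refine h1.trans ?_
  rw [htl]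
  by_cases hy : Real.log t / 2 ≤ y
  · nlinarith
  · push Not at hy
    have h2 : Z ≤ Real.exp (Real.log t / 2) := hZe.trans (Real.exp_le_exp.2 hy.le)
    have h3 : Real.log t / 2 ≤ Real.exp (Real.log t / 2) := by
      linarith [Real.add_one_le_exp (Real.log t / 2)]
    have h4 : Real.exp (Real.log t / 2) * Real.exp (Real.log t / 2) = t := by
      rw [← Real.exp_add, add_halves, Real.exp_log (by linarith)]
    have hM0 : 0 ≤ M := Finset.sum_nonneg (fun _ _ => by positivity)
    have h5 : Real.log t / 2 * Z ≤ t := by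
      exact (mul_le_mul h3 h2 (by linarith) (by positivity)).trans h4.le
    nlinarith

theorem vertex_ineq {α : Type*} (G : SimpleGraph α) (A : Finset α) (d D : ℝ) (hD : 1 ≤ D)
    (hdD : D ≤ d) (v : α) (hv : v ∈ A)
    (hdeg : ∀ u ∈ A, G.Adj v u →
      ((A.filter (fun w => G.Adj v w ∧ G.Adj u w)).card : ℝ) ≤ D) :
    0 ≤ ∑ I ∈ ind G A, (1 / D) ^ I.card *
      ((if v ∈ I then d else 0) + ((I.filter (fun w => G.Adj v w)).card : ℝ)
        - Real.log (d / D) / 12) := by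
  have hD0 : 0 < D := by linarith
  rw [← Finset.sum_fiberwise_of_maps_to (t := (ind G A).filter (fun J => v ∉ J ∧ ∀ w ∈ J, ¬ G.Adj v w))
    (g := fun I => I.filter (fun w => w ≠ v ∧ ¬ G.Adj v w))]
  · refine Finset.sum_nonneg fun J hJ => ?_
    rw [Finset.mem_filter] at hJ
    obtain ⟨hJ, hJv, hJn⟩ := hJ
    rw [fiber G A v hv _ J hJ hJv hJn]
    set X := A.filter (fun u => G.Adj v u ∧ ∀ w ∈ J, ¬ G.Adj u w) with hX
    have hloc := local_ineq G X d D hD hdD (by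
      intro u hu
      rw [hX, Finset.mem_filter] at hu
      refine le_trans ?_ (hdeg u hu.1 hu.2.1)
      refine Nat.cast_le.2 (Finset.card_le_card ?_)
      intro w hw
      simp only [hX, Finset.mem_filter] at hw ⊢
      tauto)
    set L := Real.log (d / D) / 12
    have e1 : (1 / D) ^ (insert v J).card *
      ((if v ∈ insert v J then d else 0) + (((insert v J).filter (fun w => G.Adj v w)).card : ℝ) - L)
        = (1 / D) ^ J.card * ((1 / D) * (d - L)) := by
      have : (insert v J).filter (fun w => G.Adj v w) = ∅ := by
        rw [Finset.filter_eq_empty_iff]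
        intro w hw
        rcases Finset.mem_insert.1 hw with rfl | hw
        · exact G.loopless.irrefl _
        · exact hJn w hw
      rw [this, Finset.card_insert_of_notMem hJv]
      simp
      ring
    have e2 : ∀ S ∈ ind G X, (1 / D) ^ (J ∪ S).card *
      ((if v ∈ J ∪ S then d else 0) + (((J ∪ S).filter (fun w => G.Adj v w)).card : ℝ) - L)
        = (1 / D) ^ J.card * ((S.card : ℝ) * (1 / D) ^ S.card - L * (1 / D) ^ S.card) := by
      intro S hS
      rw [mem_ind] at hS
      have hSX' : ∀ a ∈ S, a ∈ A ∧ G.Adj v a ∧ ∀ w ∈ J, ¬ G.Adj a w := by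
        intro a ha
        have := hS.1 ha
        rwa [hX, Finset.mem_filter] at this
      have h1 : v ∉ J ∪ S := by
        intro h
        rcases Finset.mem_union.1 h with h | h
        · exact hJv h
        · exact G.loopless.irrefl _ (hSX' v h).2.1
      have h2 : (J ∪ S).filter (fun w => G.Adj v w) = S := by
        ext a
        have h3 := hSX' a
        have h4 := hJn a
        simp only [Finset.mem_filter, Finset.mem_union]
        tauto
      have h3 : Disjoint J S := Finset.disjoint_left.2 fun a ha hb => hJn a ha (hSX' a hb).2.1
      rw [h2, if_neg h1, Finset.card_union_of_disjoint h3, pow_add]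
      ring
    rw [e1, Finset.sum_congr rfl e2, ← Finset.mul_sum, ← mul_add, Finset.sum_sub_distrib,
      ← Finset.mul_sum]
    refine mul_nonneg (by positivity) ?_
    linarith
  · intro I hI
    rw [mem_ind] at hI
    rw [Finset.mem_filter, mem_ind]
    refine ⟨⟨(Finset.filter_subset _ _).trans hI.1, ?_⟩, by simp, ?_⟩
    · intro a ha b hb
      exact hI.2 a (Finset.mem_filter.1 ha).1 b (Finset.mem_filter.1 hb).1
    · intro w hw
      exact (Finset.mem_filter.1 hw).2.2

theorem hardcore {α : Type*} (G : SimpleGraph α) (A : Finset α) (d D : ℝ) (hD : 1 ≤ D)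
    (hdD : D ≤ d)
    (hdeg1 : ∀ u ∈ A, ((A.filter (fun w => G.Adj u w)).card : ℝ) ≤ d)
    (hdeg : ∀ v ∈ A, ∀ u ∈ A, G.Adj v u →
      ((A.filter (fun w => G.Adj v w ∧ G.Adj u w)).card : ℝ) ≤ D) :
    ∃ I ⊆ A, (∀ u ∈ I, ∀ w ∈ I, ¬ G.Adj u w) ∧
      (A.card : ℝ) * Real.log (d / D) ≤ 24 * d * I.card := by
  have hD0 : 0 < D := by linarith
  have h := Finset.sum_nonneg fun v hv => vertex_ineq G A d D hD hdD v hv (hdeg v hv)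
  rw [Finset.sum_comm] at h
  have hne : (ind G A).Nonempty := ⟨∅, by simp [mem_ind]⟩
  obtain ⟨I, hI, hpos⟩ : ∃ I ∈ ind G A, 0 ≤ ∑ v ∈ A, (1 / D) ^ I.card *
      ((if v ∈ I then d else 0) + ((I.filter (fun w => G.Adj v w)).card : ℝ)
        - Real.log (d / D) / 12) := by
    by_contra! hc
    exact absurd h (not_le.2 (Finset.sum_neg hc hne))
  rw [mem_ind] at hI
  refine ⟨I, hI.1, hI.2, ?_⟩
  rw [← Finset.mul_sum] at hpos
  have hpos := nonneg_of_mul_nonneg_right hpos (by positivity)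
  rw [Finset.sum_sub_distrib, Finset.sum_add_distrib, ← Finset.sum_filter, Finset.sum_const,
    Finset.sum_const, Finset.filter_mem_eq_inter, Finset.inter_eq_right.2 hI.1,
    nsmul_eq_mul, nsmul_eq_mul] at hpos
  have h2 : ∑ v ∈ A, ((I.filter (fun w => G.Adj v w)).card : ℝ) ≤ d * I.card := by
    have e : ∀ v ∈ A, ((I.filter (fun w => G.Adj v w)).card : ℝ)
        = ∑ w ∈ I, if G.Adj v w then (1 : ℝ) else 0 := by
      intro v _
      rw [Finset.sum_boole]
    rw [Finset.sum_congr rfl e, Finset.sum_comm]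
    calc _ ≤ ∑ w ∈ I, d := by
          refine Finset.sum_le_sum fun w hw => ?_
          rw [Finset.sum_boole]
          simpa [G.adj_comm] using hdeg1 w (hI.1 hw)
      _ = _ := by rw [Finset.sum_const, nsmul_eq_mul, mul_comm]
  linarith

/-! ### Off-diagonal Ramsey bound -/

/-- Bound for `r(k+1, n)`. -/
noncomputable def ramseyBd (n : ℕ) : ℕ → ℝ
  | 0 => 1
  | k + 1 => n * (48 * n / Real.log n) ^ k

theorem one_le_q (n : ℕ) (hn : 2 ≤ n) : Real.sqrt n ≤ 48 * n / Real.log n := by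
  have hn' : (2 : ℝ) ≤ n := by exact_mod_cast hn
  have hlog : 0 < Real.log n := Real.log_pos (by linarith)
  rw [le_div_iff₀ hlog]
  have h1 : Real.log n ≤ 2 * Real.sqrt n := by
    have h := Real.log_le_sub_one_of_pos (x := Real.sqrt n) (by positivity)
    rw [Real.log_sqrt (by positivity)] at h
    linarith
  have h2 : Real.sqrt n * Real.sqrt n = n := Real.mul_self_sqrt (by positivity)
  have h3 : 0 ≤ Real.sqrt n := by positivity
  nlinarith

theorem one_le_sqrt (n : ℕ) (hn : 2 ≤ n) : 1 ≤ Real.sqrt n := by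
  rw [Real.one_le_sqrt]
  exact_mod_cast (by omega : 1 ≤ n)

theorem ramseyBd_ratio (n : ℕ) (hn : 2 ≤ n) (k : ℕ) :
    1 ≤ ramseyBd n k ∧ Real.sqrt n * ramseyBd n k ≤ ramseyBd n (k + 1) := by
  have hn' : (2 : ℝ) ≤ n := by exact_mod_cast hn
  have hq := one_le_q n hn
  have hs := one_le_sqrt n hn
  have h2 : Real.sqrt n * Real.sqrt n = n := Real.mul_self_sqrt (by positivity)
  cases k with
  | zero => simp only [ramseyBd, pow_zero, mul_one, zero_add, le_refl, true_and]; nlinarith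
  | succ k =>
    have h1 : 1 ≤ (48 * n / Real.log n) ^ k := one_le_pow₀ (hs.trans hq)
    simp only [ramseyBd]
    refine ⟨by nlinarith, ?_⟩
    rw [pow_succ]
    calc Real.sqrt n * (n * (48 * n / Real.log n) ^ k)
        ≤ (48 * n / Real.log n) * (n * (48 * n / Real.log n) ^ k) := by gcongr
      _ = _ := by ring

theorem ramsey_bound {α : Type*} (G : SimpleGraph α) (n : ℕ) (hn : 2 ≤ n) (k : ℕ) :
    ∀ A : Finset α,
      (∀ S ⊆ A, (∀ u ∈ S, ∀ w ∈ S, u ≠ w → G.Adj u w) → S.card < k + 1) →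
      (∀ S ⊆ A, (∀ u ∈ S, ∀ w ∈ S, ¬ G.Adj u w) → S.card < n) →
      (A.card : ℝ) < ramseyBd n k := by
  have hn' : (2 : ℝ) ≤ n := by exact_mod_cast hn
  have hlog : 0 < Real.log n := Real.log_pos (by linarith)
  induction k using Nat.strong_induction_on with
  | _ k ih =>
  intro A hcl hin
  match k, ih, hcl with
  | 0, ih, hcl =>
    have : A = ∅ := by
      by_contra h
      obtain ⟨a, ha⟩ := Finset.nonempty_iff_ne_empty.2 h
      have := hcl {a} (by simpa using ha) (by simp)
      simp at this
    simp [this, ramseyBd]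
  | 1, ih, hcl =>
    have := hin A (by rfl) (by
      intro u hu w hw hadj
      have hne := hadj.ne
      have := hcl {u, w} (by intro x; simp; rintro (rfl | rfl) <;> assumption) (by
        intro a ha b hb hab
        simp at ha hb
        rcases ha with rfl | rfl <;> rcases hb with rfl | rfl <;>
          first | exact absurd rfl hab | exact hadj | exact hadj.symm)
      rw [Finset.card_pair hne] at this
      omega)
    simp [ramseyBd]
    exact this
  | k + 2, ih, hcl =>
    have r1 := ramseyBd_ratio n hn k
    have r2 := ramseyBd_ratio n hn (k + 1)
    have hs := one_le_sqrt n hn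
    have hdD : ramseyBd n k ≤ ramseyBd n (k + 1) := by nlinarith
    obtain ⟨I, hIA, hI, hc⟩ := hardcore G A (ramseyBd n (k + 1)) (ramseyBd n k) r1.1 hdD
      (by
        intro u hu
        refine (ih (k + 1) (by omega) _ ?_ ?_).le
        · intro S hS hSc
          have hu' : u ∉ S := fun h => G.loopless.irrefl _ (Finset.mem_filter.1 (hS h)).2
          have := hcl (insert u S) (by
            refine Finset.insert_subset hu fun x hx => (Finset.mem_filter.1 (hS hx)).1) (by
            intro a ha b hb hab
            rcases Finset.mem_insert.1 ha with rfl | ha' <;>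
            rcases Finset.mem_insert.1 hb with rfl | hb'
            · exact absurd rfl hab
            · exact (Finset.mem_filter.1 (hS hb')).2
            · exact (Finset.mem_filter.1 (hS ha')).2.symm
            · exact hSc a ha' b hb' hab)
          rw [Finset.card_insert_of_notMem hu'] at this
          omega
        · intro S hS
          exact hin S (hS.trans (Finset.filter_subset _ _)))
      (by
        intro v hv u hu hadj
        refine (ih k (by omega) _ ?_ ?_).le
        · intro S hS hSc
          have hS' : ∀ x ∈ S, x ∈ A ∧ G.Adj v x ∧ G.Adj u x := fun x hx => by
            simpa using hS hx
          have hu' : u ∉ S := fun h => G.loopless.irrefl _ (hS' u h).2.2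
          have hv' : v ∉ insert u S := fun h => by
            rcases Finset.mem_insert.1 h with h | h
            · exact hadj.ne h
            · exact G.loopless.irrefl _ (hS' v h).2.1
          have := hcl (insert v (insert u S)) (by
            refine Finset.insert_subset hv (Finset.insert_subset hu fun x hx => (hS' x hx).1)) (by
            intro a ha b hb hab
            simp only [Finset.mem_insert] at ha hb
            rcases ha with rfl | rfl | ha <;> rcases hb with rfl | rfl | hb
            · exact absurd rfl hab
            · exact hadj
            · exact (hS' b hb).2.1
            · exact hadj.symm
            · exact absurd rfl hab
            · exact (hS' b hb).2.2
            · exact (hS' a ha).2.1.symm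
            · exact (hS' a ha).2.2.symm
            · exact hSc a ha b hb hab)
          rw [Finset.card_insert_of_notMem hv', Finset.card_insert_of_notMem hu'] at this
          omega
        · intro S hS
          exact hin S (hS.trans (Finset.filter_subset _ _)))
    have hIn := hin I hIA hI
    have hIn' : (I.card : ℝ) < n := by exact_mod_cast hIn
    have hlg : Real.log n / 2 ≤ Real.log (ramseyBd n (k + 1) / ramseyBd n k) := by
      rw [← Real.log_sqrt (by positivity)]
      refine Real.log_le_log (by linarith) ?_
      rw [le_div_iff₀ (by linarith)]
      exact r1.2
    have hd0 : 0 < ramseyBd n (k + 1) := by linarith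
    have h1 : (A.card : ℝ) * (Real.log n / 2) < 24 * ramseyBd n (k + 1) * n := by
      calc (A.card : ℝ) * (Real.log n / 2) ≤ _ := mul_le_mul_of_nonneg_left hlg (by positivity)
        _ ≤ _ := hc
        _ < _ := by
          refine mul_lt_mul_of_pos_left hIn' (by positivity)
    have h2 : ramseyBd n (k + 2) = 48 * n / Real.log n * ramseyBd n (k + 1) := by
      simp only [ramseyBd]; ring
    rw [h2, div_mul_eq_mul_div, lt_div_iff₀ hlog]
    linarith

/-! ### The game -/

abbrev GState := Finset (Sym2 ℕ) × Finset (Sym2 ℕ)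

/-- From the position `s`, Builder can reach `Q` within `k` moves. -/
inductive Force (Q : GState → Prop) : ℕ → GState → Prop
  | done (k : ℕ) (s : GState) (h : Q s) : Force Q k s
  | move (k : ℕ) (s : GState) (e : Sym2 ℕ) (hd : ¬ e.IsDiag) (h1 : e ∉ s.1) (h2 : e ∉ s.2)
      (hr : Force Q k (insert e s.1, s.2)) (hb : Force Q k (s.1, insert e s.2)) :
      Force Q (k + 1) s

theorem Force.mono {Q : GState → Prop} {k : ℕ} {s : GState} (h : Force Q k s) :
    ∀ {l : ℕ}, k ≤ l → Force Q l s := by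
  induction h with
  | done k s h => intro l _; exact .done l s h
  | move k s e hd h1 h2 hr hb ihr ihb =>
    intro l hl
    obtain ⟨l, rfl⟩ : ∃ l', l = l' + 1 := ⟨l - 1, by omega⟩
    exact .move l s e hd h1 h2 (ihr (by omega)) (ihb (by omega))

theorem Force.bind {Q Q' : GState → Prop} {k : ℕ} {s : GState} (h : Force Q k s) :
    ∀ {l : ℕ}, (∀ s', s ≤ s' → Q s' → Force Q' l s') → Force Q' (k + l) s := by
  induction h with
  | done k s h => intro l H; exact (H s le_rfl h).mono (by omega)
  | move k s e hd h1 h2 hr hb ihr ihb =>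
    intro l H
    rw [Nat.add_right_comm]
    refine .move _ s e hd h1 h2 (ihr fun s' hs => H s' (le_trans ?_ hs))
      (ihb fun s' hs => H s' (le_trans ?_ hs))
    · exact ⟨Finset.subset_insert _ _, le_rfl⟩
    · exact ⟨le_rfl, Finset.subset_insert _ _⟩

theorem force_query (e : Sym2 ℕ) (hd : ¬ e.IsDiag) (s : GState) :
    Force (fun s' => e ∈ s'.1 ∨ e ∈ s'.2) 1 s := by
  by_cases h : e ∈ s.1 ∨ e ∈ s.2
  · exact .done _ _ h
  · push Not at h
    exact .move 0 s e hd h.1 h.2 (.done _ _ (by simp)) (.done _ _ (by simp))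

theorem force_query_all (E : Finset (Sym2 ℕ)) (hE : ∀ e ∈ E, ¬ e.IsDiag) (s : GState) :
    Force (fun s' => ∀ e ∈ E, e ∈ s'.1 ∨ e ∈ s'.2) E.card s := by
  induction E using Finset.induction_on generalizing s with
  | empty => exact .done _ _ (by simp)
  | insert e E he ih =>
    rw [Finset.card_insert_of_notMem he]
    refine (ih (fun e he => hE e (by simp [he])) s).bind fun s' _ h1 => ?_
    have := (force_query e (hE e (by simp)) s').bind (l := 0)
      (Q' := fun s' => ∀ f ∈ insert e E, f ∈ s'.1 ∨ f ∈ s'.2) fun s'' hs h2 => .done _ _ (by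
        intro f hf
        rcases Finset.mem_insert.1 hf with rfl | hf
        · exact h2
        · exact (h1 f hf).imp (fun h => hs.1 h) (fun h => hs.2 h))
    exact this

/-- `T` contains a clique on `k` vertices of `A`. -/
def HasK (T : Finset (Sym2 ℕ)) (A : Finset ℕ) (k : ℕ) : Prop :=
  ∃ S ⊆ A, S.card = k ∧ ∀ u ∈ S, ∀ v ∈ S, u ≠ v → s(u, v) ∈ T

theorem force_base (n : ℕ) (hn : 2 ≤ n) (k : ℕ) (A : Finset ℕ) (hA : ramseyBd n k ≤ A.card)
    (s : GState) :
    Force (fun s' => HasK s'.1 A (k + 1) ∨ HasK s'.2 A n) (A.card ^ 2) s := by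
  have hE : (A.offDiag.image (fun p => s(p.1, p.2))).card ≤ A.card ^ 2 := by
    refine Finset.card_image_le.trans ?_
    rw [Finset.offDiag_card, sq]
    omega
  refine Force.mono ?_ hE
  refine (force_query_all (A.offDiag.image (fun p => s(p.1, p.2))) ?_ s).bind (l := 0)
    fun s' _ h => .done _ _ ?_
  · intro e he
    obtain ⟨p, hp, rfl⟩ := Finset.mem_image.1 he
    simpa using (Finset.mem_offDiag.1 hp).2.2
  · let G : SimpleGraph ℕ :=
      { Adj := fun u v => u ≠ v ∧ s(u, v) ∈ s'.1
        symm := ⟨fun u v h => ⟨h.1.symm, by rw [Sym2.eq_swap]; exact h.2⟩⟩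
        loopless := ⟨fun u h => h.1 rfl⟩ }
    by_contra! hc
    refine absurd (ramsey_bound G n hn k A ?_ ?_) (not_lt.2 hA)
    · intro S hS hcl
      by_contra! hk
      obtain ⟨T, hT, hTc⟩ := Finset.exists_subset_card_eq hk
      exact hc.1 ⟨T, hT.trans hS, hTc, fun u hu v hv huv => (hcl u (hT hu) v (hT hv) huv).2⟩
    · intro S hS hcl
      by_contra! hk
      obtain ⟨T, hT, hTc⟩ := Finset.exists_subset_card_eq hk
      refine hc.2 ⟨T, hT.trans hS, hTc, fun u hu v hv huv => ?_⟩
      have h1 := hcl u (hT hu) v (hT hv)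
      have h2 := h s(u, v) (Finset.mem_image.2 ⟨(u, v), by
        simp [huv, hS (hT hu), hS (hT hv)], rfl⟩)
      rcases h2 with h2 | h2
      · exact absurd ⟨huv, h2⟩ h1
      · exact h2

theorem HasK.mono {T T' : Finset (Sym2 ℕ)} {A A' : Finset ℕ} {k : ℕ} (h : HasK T A k)
    (hT : T ⊆ T') (hA : A ⊆ A') : HasK T' A' k := by
  obtain ⟨S, h1, h2, h3⟩ := h
  exact ⟨S, h1.trans hA, h2, fun u hu v hv huv => hT (h3 u hu v hv huv)⟩

theorem HasK.insert {T : Finset (Sym2 ℕ)} {A B : Finset ℕ} {k : ℕ} (h : HasK T A k) {v : ℕ}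
    (hv : ∀ w ∈ A, w ≠ v ∧ s(v, w) ∈ T) (hvB : v ∈ B) (hAB : A ⊆ B) : HasK T B (k + 1) := by
  obtain ⟨S, h1, h2, h3⟩ := h
  have hvS : v ∉ S := fun h => (hv v (h1 h)).1 rfl
  refine ⟨Insert.insert v S, Finset.insert_subset hvB (h1.trans hAB), ?_, ?_⟩
  · rw [Finset.card_insert_of_notMem hvS, h2]
  · intro a ha b hb hab
    rcases Finset.mem_insert.1 ha with rfl | ha' <;>
    rcases Finset.mem_insert.1 hb with rfl | hb'
    · exact absurd rfl hab
    · exact (hv b (h1 hb')).2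
    · rw [Sym2.eq_swap]; exact (hv a (h1 ha')).2
    · exact h3 a ha' b hb' hab

theorem Force.imp {Q Q' : GState → Prop} {k : ℕ} {s : GState} (h : Force Q k s)
    (H : ∀ s', s ≤ s' → Q s' → Q' s') : Force Q' k s :=
  h.bind (l := 0) fun s' h1 h2 => .done _ _ (H s' h1 h2)

/-- `Good n j a c` : with `a` vertices Builder forces a red `K_j` or a blue `K_n` at cost `c`. -/
def Good (n j a c : ℕ) : Prop :=
  ∀ A : Finset ℕ, A.card = a → ∀ s : GState,
    Force (fun s' => HasK s'.1 A j ∨ HasK s'.2 A n) c s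

/-- Inner loop: `i` blue vertices still to be found. -/
theorem force_loop (n j a c : ℕ) (ha : 1 ≤ a) (hg : Good n j a c) (i : ℕ) :
    ∀ X : Finset ℕ, X.card = i * a → ∀ s : GState,
    Force (fun s' => HasK s'.1 X (j + 1) ∨ HasK s'.2 X n ∨ HasK s'.2 X i)
      (i * (n * a) + c) s ∨ n < i := by
  induction i with
  | zero =>
    intro X hX s
    exact Or.inl (.done _ _ (Or.inr (Or.inr ⟨∅, by simp⟩)))
  | succ i ih =>
    intro X hX s
    by_cases hni : n < i + 1
    · exact Or.inr hni
    left
    have hXpos : 0 < X.card := by rw [hX]; positivity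
    obtain ⟨v, hv⟩ := Finset.card_pos.1 hXpos
    set E := (X.erase v).image (fun w => s(v, w)) with hE
    have hEc : E.card ≤ n * a := by
      refine Finset.card_image_le.trans ((Finset.card_erase_le).trans ?_)
      rw [hX]
      exact Nat.mul_le_mul_right a (by omega)
    have hEd : ∀ e ∈ E, ¬ e.IsDiag := by
      intro e he
      obtain ⟨w, hw, rfl⟩ := Finset.mem_image.1 he
      simpa using (Finset.ne_of_mem_erase hw).symm
    have h0 := (force_query_all E hEd s).mono hEc
    have : (i + 1) * (n * a) + c = n * a + (i * (n * a) + c) := by ring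
    rw [this]
    refine h0.bind fun s' hs hq => ?_
    set Rd := (X.erase v).filter (fun w => s(v, w) ∈ s'.1) with hRd
    set Bl := (X.erase v).filter (fun w => ¬ s(v, w) ∈ s'.1) with hBl
    have hcard : Rd.card + Bl.card = X.card - 1 := by
      rw [hRd, hBl, Finset.card_filter_add_card_filter_not, Finset.card_erase_of_mem hv]
    have hRX : Rd ⊆ X := (Finset.filter_subset _ _).trans (Finset.erase_subset _ _)
    have hBX : Bl ⊆ X := (Finset.filter_subset _ _).trans (Finset.erase_subset _ _)
    by_cases hr : a ≤ Rd.card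
    · obtain ⟨Y, hY, hYc⟩ := Finset.exists_subset_card_eq hr
      refine ((hg Y hYc s').mono (Nat.le_add_left _ _)).imp fun s'' hs' h => ?_
      rcases h with h | h
      · left
        refine h.insert (v := v) (fun w hw => ?_) hv (hY.trans hRX)
        have := Finset.mem_filter.1 (hY hw)
        exact ⟨Finset.ne_of_mem_erase this.1, hs'.1 this.2⟩
      · exact Or.inr (Or.inl (h.mono le_rfl (hY.trans hRX)))
    · have hb : i * a ≤ Bl.card := by
        have : (i + 1) * a = i * a + a := by ring
        omega
      obtain ⟨Y, hY, hYc⟩ := Finset.exists_subset_card_eq hb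
      have hf := (ih Y hYc s').resolve_right (by omega)
      refine hf.imp fun s'' hs' h => ?_
      have hYX := hY.trans hBX
      rcases h with h | h | h
      · exact Or.inl (h.mono le_rfl hYX)
      · exact Or.inr (Or.inl (h.mono le_rfl hYX))
      · right; right
        refine h.insert (v := v) (fun w hw => ?_) hv hYX
        have hw' := Finset.mem_filter.1 (hY hw)
        refine ⟨Finset.ne_of_mem_erase hw'.1, hs'.2 ?_⟩
        exact (hq _ (Finset.mem_image_of_mem _ hw'.1)).resolve_left hw'.2

theorem good_step (n j a c : ℕ) (ha : 1 ≤ a) (hg : Good n j a c) :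
    Good n (j + 1) (n * a) (n * (n * a) + c) := by
  intro A hA s
  refine ((force_loop n j a c ha hg n A hA s).resolve_right (lt_irrefl n)).imp fun s' _ h => ?_
  tauto

theorem good_iter (n j a c : ℕ) (hn : 1 ≤ n) (ha : 1 ≤ a) (hg : Good n j a c) (i : ℕ) :
    Good n (j + i) (n ^ i * a) (i * (n ^ (i + 1) * a) + c) := by
  induction i with
  | zero => simpa using hg
  | succ i ih =>
    have h := good_step n (j + i) _ _ (Nat.mul_pos (pow_pos hn i) ha) ih
    intro A hA s
    refine (h A (by rw [hA]; ring) s).mono ?_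
    have h1 : n ^ (i + 1) ≤ n ^ (i + 2) := Nat.pow_le_pow_right hn (by omega)
    have h2 : n * (n * (n ^ i * a)) = n ^ (i + 2) * a := by ring
    have h3 : i * (n ^ (i + 1) * a) ≤ i * (n ^ (i + 2) * a) := by gcongr
    rw [h2]
    have h4 : (i + 1) * (n ^ (i + 1 + 1) * a) = n ^ (i + 2) * a + i * (n ^ (i + 2) * a) := by ring
    omega

theorem exists_fresh (s : GState) : ∃ e : Sym2 ℕ, ¬ e.IsDiag ∧ e ∉ s.1 ∧ e ∉ s.2 := by
  have hinj : Function.Injective (fun i : ℕ => s(0, i + 1)) := by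
    intro i j h
    simpa using h
  obtain ⟨e, he, hs⟩ := (Set.infinite_range_of_injective hinj).exists_notMem_finset (s.1 ∪ s.2)
  obtain ⟨i, rfl⟩ := he
  refine ⟨s(0, i + 1), ?_, ?_⟩
  · simp
  · simpa using hs

/-- Any legal move, chosen to keep `Force` whenever possible. -/
theorem exists_next (Q : GState → Prop) (k : ℕ) (s : GState) :
    ∃ e : Sym2 ℕ, (¬ e.IsDiag ∧ e ∉ s.1 ∧ e ∉ s.2) ∧ (Force Q k s → Q s ∨
      (1 ≤ k ∧ Force Q (k - 1) (insert e s.1, s.2) ∧ Force Q (k - 1) (s.1, insert e s.2))) := by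
  by_cases hF : Force Q k s
  · cases hF with
    | done _ _ h =>
      obtain ⟨e, he⟩ := exists_fresh s
      exact ⟨e, he, fun _ => Or.inl h⟩
    | move k _ e hd h1 h2 hr hb =>
      exact ⟨e, ⟨hd, h1, h2⟩, fun _ => Or.inr ⟨by omega, hr, hb⟩⟩
  · obtain ⟨e, he⟩ := exists_fresh s
    exact ⟨e, he, fun h => absurd h hF⟩

noncomputable def nextEdge (Q : GState → Prop) (k : ℕ) (s : GState) : Sym2 ℕ :=
  (exists_next Q k s).choose

noncomputable def gstep (Q : GState → Prop) (p : ℕ × GState) (c : Bool) : ℕ × GState :=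
  (p.1 - 1, if c then (insert (nextEdge Q p.1 p.2) p.2.1, p.2.2)
    else (p.2.1, insert (nextEdge Q p.1 p.2) p.2.2))

noncomputable def stateOf (Q : GState → Prop) (N : ℕ) (h : List Bool) : ℕ × GState :=
  h.foldl (gstep Q) (N, (∅, ∅))

noncomputable def strat (Q : GState → Prop) (N : ℕ) (h : List Bool) : Sym2 ℕ :=
  nextEdge Q (stateOf Q N h).1 (stateOf Q N h).2

theorem stateOf_append (Q : GState → Prop) (N : ℕ) (h : List Bool) (c : Bool) :
    stateOf Q N (h ++ [c]) = gstep Q (stateOf Q N h) c := by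
  simp [stateOf, List.foldl_append]

theorem strat_mem (Q : GState → Prop) (N : ℕ) (h : List Bool) :
    ∀ i < h.length, strat Q N (h.take i) ∈ (stateOf Q N h).2.1 ∨
      strat Q N (h.take i) ∈ (stateOf Q N h).2.2 := by
  induction h using List.reverseRecOn with
  | nil => intro i hi; simp at hi
  | append_singleton h c ih =>
    intro i hi
    rw [stateOf_append]
    rw [List.length_append, List.length_singleton] at hi
    rcases Nat.lt_succ_iff_lt_or_eq.1 hi with hi' | rfl
    · rw [List.take_append_of_le_length hi'.le]
      have := ih i hi'
      cases c <;> simp only [gstep] <;> simp <;> tauto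
    · rw [List.take_left]
      cases c <;> simp [gstep, strat]

theorem strat_valid (Q : GState → Prop) (N : ℕ) : ValidBuilder (strat Q N) := by
  refine ⟨fun h => (exists_next Q _ _).choose_spec.1.1, fun h i hi heq => ?_⟩
  have h1 := strat_mem Q N h i hi
  have h2 := (exists_next Q (stateOf Q N h).1 (stateOf Q N h).2).choose_spec.1.2
  rw [heq] at h1
  exact h1.elim h2.1 h2.2

theorem builderWins_of_force (m n N : ℕ) (A : Finset ℕ)
    (hF : Force (fun s' => HasK s'.1 A m ∨ HasK s'.2 A n) N (∅, ∅)) : BuilderWins m n N := by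
  set Q : GState → Prop := fun s' => HasK s'.1 A m ∨ HasK s'.2 A n with hQ
  refine ⟨strat Q N, strat_valid Q N, fun P => ?_⟩
  have hinv : ∀ t, (stateOf Q N (histOf P t)).1 = N - t ∧
      (Q (stateOf Q N (histOf P t)).2 ∨
        (t ≤ N ∧ Force Q (N - t) (stateOf Q N (histOf P t)).2)) := by
    intro t
    induction t with
    | zero => exact ⟨rfl, Or.inr ⟨by omega, hF⟩⟩
    | succ t ih =>
      obtain ⟨ih1, ih2⟩ := ih
      rw [histOf, stateOf_append]
      refine ⟨by simp only [gstep]; omega, ?_⟩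
      have hQm : Q (stateOf Q N (histOf P t)).2 →
          Q (gstep Q (stateOf Q N (histOf P t)) (P (histOf P t))).2 := by
        rintro (h | h)
        · refine Or.inl (h.mono ?_ le_rfl)
          cases P (histOf P t) <;> simp [gstep]
        · refine Or.inr (h.mono ?_ le_rfl)
          cases P (histOf P t) <;> simp [gstep]
      rcases ih2 with h | ⟨htN, h⟩
      · exact Or.inl (hQm h)
      · have hs := (exists_next Q (stateOf Q N (histOf P t)).1
          (stateOf Q N (histOf P t)).2).choose_spec.2 (by rw [ih1]; exact h)
        rcases hs with h | ⟨hk, hr, hb⟩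
        · exact Or.inl (hQm h)
        · right
          rw [ih1] at hk
          refine ⟨by omega, ?_⟩
          have e : N - (t + 1) = (stateOf Q N (histOf P t)).1 - 1 := by omega
          rw [e]
          cases P (histOf P t)
          · exact hb
          · exact hr
  have hmem : ∀ t, (∀ e ∈ (stateOf Q N (histOf P t)).2.1, ∃ t' < t,
      strat Q N (histOf P t') = e ∧ P (histOf P t') = true) ∧
      (∀ e ∈ (stateOf Q N (histOf P t)).2.2, ∃ t' < t,
      strat Q N (histOf P t') = e ∧ P (histOf P t') = false) := by
    intro t
    induction t with
    | zero => simp [histOf, stateOf]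
    | succ t ih =>
      have m1 : ∀ e ∈ (stateOf Q N (histOf P t)).2.1, ∃ t' < t + 1,
          strat Q N (histOf P t') = e ∧ P (histOf P t') = true := fun e he => by
        obtain ⟨t', h1, h2⟩ := ih.1 e he
        exact ⟨t', by omega, h2⟩
      have m2 : ∀ e ∈ (stateOf Q N (histOf P t)).2.2, ∃ t' < t + 1,
          strat Q N (histOf P t') = e ∧ P (histOf P t') = false := fun e he => by
        obtain ⟨t', h1, h2⟩ := ih.2 e he
        exact ⟨t', by omega, h2⟩
      have hst : stateOf Q N (histOf P (t + 1))
          = gstep Q (stateOf Q N (histOf P t)) (P (histOf P t)) := stateOf_append _ _ _ _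
      rw [hst]
      cases hc : P (histOf P t)
      · refine ⟨m1, fun e he => ?_⟩
        rcases Finset.mem_insert.1 (show e ∈ insert (strat Q N (histOf P t)) _ from he)
          with rfl | he
        · exact ⟨t, by omega, rfl, hc⟩
        · exact m2 e he
      · refine ⟨fun e he => ?_, m2⟩
        rcases Finset.mem_insert.1 (show e ∈ insert (strat Q N (histOf P t)) _ from he)
          with rfl | he
        · exact ⟨t, by omega, rfl, hc⟩
        · exact m1 e he
  have hfin : Q (stateOf Q N (histOf P N)).2 := by
    rcases (hinv N).2 with h | ⟨_, h⟩
    · exact h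
    · rw [Nat.sub_self] at h
      cases h with
      | done _ _ h => exact h
  rcases hfin with ⟨S, _, h1, h2⟩ | ⟨S, _, h1, h2⟩
  · left
    exact ⟨S, h1, fun u hu v hv huv => (hmem N).1 _ (h2 u hu v hv huv)⟩
  · right
    exact ⟨S, h1, fun u hu v hv huv => (hmem N).2 _ (h2 u hu v hv huv)⟩

theorem onlineRamsey_le (n k i : ℕ) (hn : 2 ≤ n) :
    onlineRamsey (k + 1 + i) n ≤
      i * (n ^ (i + 1) * ⌈ramseyBd n k⌉₊) + ⌈ramseyBd n k⌉₊ ^ 2 := by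
  refine Nat.sInf_le ?_
  have h1 := (ramseyBd_ratio n hn k).1
  have hg : Good n (k + 1) ⌈ramseyBd n k⌉₊ (⌈ramseyBd n k⌉₊ ^ 2) := by
    intro A hA s
    have := force_base n hn k A (by rw [hA]; exact Nat.le_ceil _) s
    rwa [hA] at this
  have hi := good_iter n (k + 1) _ _ (by omega) (Nat.one_le_ceil_iff.2 (by linarith)) hg i
  exact builderWins_of_force _ _ _ (Finset.range _) (hi _ (Finset.card_range _) _)

theorem stmt4 (m : ℕ) (hm : 3 ≤ m) :
    ∃ C : ℝ, 0 < C ∧ ∃ n₀ : ℕ, ∀ n : ℕ, n₀ ≤ n →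
      (onlineRamsey m n : ℝ) ≤ C * (n : ℝ) ^ m / (Real.log n) ^ (m / 2 - 1) := by
  obtain ⟨k, hk⟩ : ∃ k, m / 2 = k + 1 := ⟨m / 2 - 1, by omega⟩
  obtain ⟨i, hi⟩ : ∃ i, m = (k + 1) + 1 + i := ⟨m - (k + 2), by omega⟩
  refine ⟨i * (2 * 48 ^ k) + (2 * 48 ^ k) ^ 2, by positivity, 3, fun n hn => ?_⟩
  have hn' : (3 : ℝ) ≤ n := by exact_mod_cast hn
  have hlog : 1 ≤ Real.log n := by
    rw [Real.le_log_iff_exp_le (by linarith)]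
    linarith [Real.exp_one_lt_d9]
  have h := onlineRamsey_le n (k + 1) i (by omega)
  rw [← hi] at h
  have h1 := (ramseyBd_ratio n (by omega) (k + 1)).1
  set c := ⌈ramseyBd n (k + 1)⌉₊ with hc
  have hc2 : (c : ℝ) ≤ 2 * 48 ^ k * n ^ (k + 1) / Real.log n ^ k := by
    have : (c : ℝ) < ramseyBd n (k + 1) + 1 := Nat.ceil_lt_add_one (by linarith)
    have e : ramseyBd n (k + 1) = 48 ^ k * n ^ (k + 1) / Real.log n ^ k := by
      simp only [ramseyBd, div_pow, mul_pow]; ring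
    have e2 : 2 * 48 ^ k * n ^ (k + 1) / Real.log n ^ k = 2 * ramseyBd n (k + 1) := by
      rw [e]; ring
    rw [e2]; linarith
  have h' : (onlineRamsey m n : ℝ) ≤ i * ((n : ℝ) ^ (i + 1) * c) + (c : ℝ) ^ 2 := by
    exact_mod_cast h
  have hLk : 1 ≤ Real.log n ^ k := one_le_pow₀ hlog
  have hexp : m / 2 - 1 = k := by omega
  rw [hexp]
  have t1 : (i : ℝ) * ((n : ℝ) ^ (i + 1) * c) ≤ i * (2 * 48 ^ k) * (n : ℝ) ^ m / Real.log n ^ k := by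
    calc (i : ℝ) * ((n : ℝ) ^ (i + 1) * c)
        ≤ i * ((n : ℝ) ^ (i + 1) * (2 * 48 ^ k * n ^ (k + 1) / Real.log n ^ k)) := by gcongr
      _ = _ := by
        have : (n : ℝ) ^ m = n ^ (i + 1) * n ^ (k + 1) := by rw [← pow_add]; congr 1; omega
        rw [this]; ring
  have t2 : (c : ℝ) ^ 2 ≤ (2 * 48 ^ k) ^ 2 * (n : ℝ) ^ m / Real.log n ^ k := by
    calc (c : ℝ) ^ 2 ≤ (2 * 48 ^ k * n ^ (k + 1) / Real.log n ^ k) ^ 2 := by gcongr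
      _ = (2 * 48 ^ k) ^ 2 * (n : ℝ) ^ (2 * (k + 1)) / Real.log n ^ k / Real.log n ^ k := by
        field_simp
        ring
      _ ≤ (2 * 48 ^ k) ^ 2 * (n : ℝ) ^ (2 * (k + 1)) / Real.log n ^ k := by
        exact div_le_self (by positivity) hLk
      _ ≤ _ := by
        gcongr
        · linarith
        · omega
  calc _ ≤ _ := h'
    _ ≤ _ := add_le_add t1 t2
    _ = _ := by ring

end OnlineRamseyGame
end
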